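/- arXiv:0909.4865 — 2 statements merged into one kernel-verified Lean document; each statement's English description precedes it below -/
import Mathlib

section
/- Let f be a real binary quintic with distinct roots (squarefree over ℂ). Then the real rank of f is 5 if and only if f has five distinct real roots. -/
open MvPolynomial

noncomputable section

/-- The real linear binary form `a·x + b·y`. -/
def lin (a b : ℝ) : MvPolynomial (Fin 2) ℝ := C a * X 0 + C b * X 1

/-- `f` is a sum of `r` terms `cⱼ · ℓⱼ^d` with `ℓⱼ` nonzero real linear forms. -/
def HasDecomp (f : MvPolynomial (Fin 2) ℝ) (d r : ℕ) : Prop :=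
  ∃ c a b : Fin r → ℝ, (∀ j, (a j, b j) ≠ (0, 0)) ∧
    f = ∑ j, C (c j) * lin (a j) (b j) ^ d

/-- The real (symmetric) rank of a binary form of degree `d`:
the least number of `d`-th powers of real linear forms needed to write `f`. -/
def realRank (f : MvPolynomial (Fin 2) ℝ) (d : ℕ) : ℕ :=
  sInf {r | HasDecomp f d r}

/-- The set of real projective roots of a binary form. -/
def projRoots (f : MvPolynomial (Fin 2) ℝ) : Set (Projectivization ℝ (Fin 2 → ℝ)) :=
  {p | eval p.rep f = 0}

/-- `f` is a product of `d` pairwise non-proportional real linear forms,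
i.e. `f` has `d` distinct real roots. -/
def SplitsDistinct (f : MvPolynomial (Fin 2) ℝ) (d : ℕ) : Prop :=
  ∃ a b : Fin d → ℝ, (∀ j, (a j, b j) ≠ (0, 0)) ∧
    (∀ i j, i ≠ j → a i * b j ≠ a j * b i) ∧
    f = ∏ j, lin (a j) (b j)

/-- `f` has distinct roots, i.e. it is squarefree as a complex polynomial. -/
def SquarefreeC (f : MvPolynomial (Fin 2) ℝ) : Prop :=
  Squarefree (MvPolynomial.map (algebraMap ℝ ℂ) f)

/-- The linear change of variables of `f` by the matrix `A`: `f(A(x,y))`. -/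
def subst (A : Matrix (Fin 2) (Fin 2) ℝ) (f : MvPolynomial (Fin 2) ℝ) :
    MvPolynomial (Fin 2) ℝ :=
  aeval (fun i => C (A i 0) * X 0 + C (A i 1) * X 1) f

/-- The complex rank of a real binary form of degree `d`. -/
def complexRank (f : MvPolynomial (Fin 2) ℝ) (d : ℕ) : ℕ :=
  sInf {r | ∃ a b : Fin r → ℂ, (∀ j, (a j, b j) ≠ (0, 0)) ∧
    MvPolynomial.map (algebraMap ℝ ℂ) f = ∑ j, (C (a j) * X 0 + C (b j) * X 1) ^ d}

/-!
The upper bound: `d` nodes on the rational normal curve of degree `d`, spread at equal angles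
modulo `π`, span a hyperplane. Rotating them by `π / d` permutes them up to sign and reverses the
orientation of that hyperplane, so at some intermediate angle it contains a given form.

The lower bound: differentiating in the direction that annihilates one of the `r` linear forms
leaves a decomposition with `r - 1` terms, and by Rolle's theorem it loses at most one real
projective root. So a form has at most as many real roots as its rank.

A squarefree quintic which does not split over `ℝ` has a nonreal root, which a real substitution
moves to `i`; the quintic is then `(x² + y²) h` with `h` a cubic. After a generic rotation the
Hankel minors of its four middle coefficients allow Prony's method to write these as a sum of two
geometric progressions with real ratios. Subtracting the corresponding two fifth powers leaves a
combination of `x⁵` and `y⁵`, so the rank is at most four.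
-/

theorem eval_lin (a b : ℝ) (v : Fin 2 → ℝ) : eval v (lin a b) = a * v 0 + b * v 1 := by
  simp [lin]

theorem C_mul_lin (c a b : ℝ) : C c * lin a b = lin (c * a) (c * b) := by
  simp only [lin, C_mul]
  ring

theorem lin_ne_zero_iff {a b : ℝ} : lin a b ≠ 0 ↔ (a, b) ≠ (0, 0) := by
  refine not_congr ⟨fun h ↦ ?_, fun h ↦ ?_⟩
  · have ha : a = 0 := by simpa [eval_lin] using congrArg (eval ![1, 0]) h
    have hb : b = 0 := by simpa [eval_lin] using congrArg (eval ![0, 1]) h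
    rw [ha, hb]
  · obtain ⟨rfl, rfl⟩ := Prod.mk.inj h
    simp [lin]

theorem isHomogeneous_lin (a b : ℝ) : (lin a b).IsHomogeneous 1 :=
  (isHomogeneous_C_mul_X a 0).add (isHomogeneous_C_mul_X b 1)

theorem not_isUnit_lin (a b : ℝ) : ¬IsUnit (lin a b) := fun h ↦ by
  simpa only [eval_lin, Pi.zero_apply, mul_zero, add_zero, not_isUnit_zero]
    using h.map (eval (0 : Fin 2 → ℝ))

namespace HasDecomp

variable {f : MvPolynomial (Fin 2) ℝ} {d r : ℕ}

theorem C_mul (h : HasDecomp f d r) (k : ℝ) : HasDecomp (C k * f) d r := by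
  obtain ⟨c, a, b, hab, rfl⟩ := h
  refine ⟨fun j ↦ k * c j, a, b, hab, ?_⟩
  simp only [Finset.mul_sum, MvPolynomial.C_mul, mul_assoc]

theorem isHomogeneous (h : HasDecomp f d r) : f.IsHomogeneous d := by
  obtain ⟨c, a, b, -, rfl⟩ := h
  refine IsHomogeneous.sum _ _ _ fun j _ ↦ ?_
  simpa using (isHomogeneous_C _ (c j)).mul ((isHomogeneous_lin (a j) (b j)).pow d)

theorem realRank_le (h : HasDecomp f d r) : realRank f d ≤ r :=
  Nat.sInf_le h

end HasDecomp

section Substitution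

variable (A : Matrix (Fin 2) (Fin 2) ℝ) (f : MvPolynomial (Fin 2) ℝ)

/-- The substitution `subst A` as a homomorphism of `ℝ`-algebras. -/
def substHom : MvPolynomial (Fin 2) ℝ →ₐ[ℝ] MvPolynomial (Fin 2) ℝ :=
  aeval fun i ↦ C (A i 0) * X 0 + C (A i 1) * X 1

theorem substHom_apply : substHom A f = subst A f := rfl

theorem aeval_subst {S : Type*} [CommRing S] [Algebra ℝ S] (x : Fin 2 → S) :
    aeval x (subst A f) = aeval ((A.map (algebraMap ℝ S)).mulVec x) f := by
  rw [subst, ← AlgHom.comp_apply, comp_aeval]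
  congr 2
  ext i
  simp [Matrix.mulVec, dotProduct, Fin.sum_univ_two]

theorem eval_subst (v : Fin 2 → ℝ) : eval v (subst A f) = eval (A.mulVec v) f := by
  simpa [coe_aeval_eq_eval] using aeval_subst A f v

theorem subst_lin (a b : ℝ) :
    subst A (lin a b) = lin (a * A 0 0 + b * A 1 0) (a * A 0 1 + b * A 1 1) := by
  simp only [subst, lin, map_add, map_mul, aeval_C, aeval_X, algebraMap_eq]
  ring

variable {f} in
theorem isHomogeneous_subst {d : ℕ} (hf : f.IsHomogeneous d) : (subst A f).IsHomogeneous d := by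
  simpa only [subst, one_mul] using hf.aeval (fun i ↦ C (A i 0) * X 0 + C (A i 1) * X 1)
    fun i ↦ isHomogeneous_lin (A i 0) (A i 1)

variable {A f}

theorem subst_inv_subst (hA : A.det ≠ 0) : subst A⁻¹ (subst A f) = f :=
  MvPolynomial.funext fun v ↦ by
    rw [eval_subst, eval_subst, Matrix.mulVec_mulVec, Matrix.mul_nonsing_inv A hA.isUnit,
      Matrix.one_mulVec]

theorem subst_subst_inv (hA : A.det ≠ 0) : subst A (subst A⁻¹ f) = f :=
  MvPolynomial.funext fun v ↦ by
    rw [eval_subst, eval_subst, Matrix.mulVec_mulVec, Matrix.nonsing_inv_mul A hA.isUnit,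
      Matrix.one_mulVec]

theorem HasDecomp.of_subst {d r : ℕ} (hA : A.det ≠ 0) (h : HasDecomp (subst A f) d r) :
    HasDecomp f d r := by
  obtain ⟨c, a, b, hab, hf⟩ := h
  refine ⟨c, fun j ↦ a j * A⁻¹ 0 0 + b j * A⁻¹ 1 0, fun j ↦ a j * A⁻¹ 0 1 + b j * A⁻¹ 1 1,
    fun j ↦ lin_ne_zero_iff.mp ?_, ?_⟩
  · rw [← subst_lin]
    intro h0
    refine lin_ne_zero_iff.mpr (hab j) ?_
    rw [← subst_subst_inv hA (f := lin (a j) (b j)), h0, ← substHom_apply, map_zero]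
  · rw [← subst_inv_subst hA (f := f), hf]
    simp only [← substHom_apply, map_sum, map_mul, map_pow, algHom_C, algebraMap_eq]
    simp only [substHom_apply, subst_lin]

theorem squarefree_subst (hA : A.det ≠ 0) (hf : Squarefree f) : Squarefree (subst A f) := by
  intro q hq
  have hdvd : subst A⁻¹ q * subst A⁻¹ q ∣ f := by
    simpa only [map_mul, substHom_apply, subst_inv_subst hA] using map_dvd (substHom A⁻¹) hq
  rw [← subst_subst_inv hA (f := q)]
  exact (hf _ hdvd).map (substHom A)

end Substitution

theorem SquarefreeC.squarefree {f : MvPolynomial (Fin 2) ℝ} (hf : SquarefreeC f) :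
    Squarefree f := by
  intro q hq
  have hunit := hf (map (algebraMap ℝ ℂ) q)
    (by simpa only [map_mul] using map_dvd (map (algebraMap ℝ ℂ)) hq)
  rw [isUnit_iff_totalDegree_of_isReduced] at hunit ⊢
  simpa only [totalDegree, support_map_of_injective q (algebraMap ℝ ℂ).injective, coeff_map,
    isUnit_map_iff] using hunit

section Veronese

variable {d : ℕ}

/-- The point of the rational normal curve in `ℝ^(d+1)` with parameter `[a : b]`; it holds the
scaled coefficients of `(a x + b y)^d`, see `binaryForm_veronese`. -/
def veronese (d : ℕ) (a b : ℝ) : Fin (d + 1) → ℝ := fun i ↦ b ^ (i : ℕ) * a ^ (i.rev : ℕ)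

/-- The binary form of degree `d` with scaled coefficients `u`: the coefficient of
`x^(d-i) y^i` is `(d choose i) u i`. -/
def binaryForm (d : ℕ) : (Fin (d + 1) → ℝ) →ₗ[ℝ] MvPolynomial (Fin 2) ℝ :=
  Fintype.linearCombination ℝ fun i ↦ C (d.choose i : ℝ) * X 0 ^ (i.rev : ℕ) * X 1 ^ (i : ℕ)

theorem binaryForm_veronese (d : ℕ) (a b : ℝ) : binaryForm d (veronese d a b) = lin a b ^ d := by
  rw [binaryForm, Fintype.linearCombination_apply, lin, add_comm (C a * X 0), add_pow,
    ← Fin.sum_univ_eq_sum_range fun k ↦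
      (C b * X 1) ^ k * (C a * X 0) ^ (d - k) * (d.choose k : MvPolynomial (Fin 2) ℝ)]
  refine Finset.sum_congr rfl fun i _ ↦ ?_
  have hi : (i.rev : ℕ) = d - i := by rw [Fin.val_rev]; omega
  simp only [veronese, smul_eq_C_mul, C_mul, C_pow, mul_pow, hi, map_natCast]
  ring

theorem exists_binaryForm_eq {f : MvPolynomial (Fin 2) ℝ} (hf : f.IsHomogeneous d) :
    ∃ u, binaryForm d u = f := by
  change f ∈ LinearMap.range (binaryForm d)
  rw [f.as_sum]
  refine Submodule.sum_mem _ fun m hm ↦ ?_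
  have hdeg : m 0 + m 1 = d := by
    simpa [Finsupp.weight_apply, Finsupp.sum_fintype] using hf (mem_support_iff.mp hm)
  let i : Fin (d + 1) := ⟨m 1, by omega⟩
  have hi : (i.rev : ℕ) = m 0 := by simp only [Fin.val_rev, i]; omega
  have hchoose : (d.choose (m 1) : ℝ) ≠ 0 := mod_cast (Nat.choose_pos (by omega)).ne'
  refine ⟨Pi.single i (coeff m f / d.choose (m 1)), ?_⟩
  rw [binaryForm, Fintype.linearCombination_apply_single, hi, smul_eq_C_mul, monomial_eq,
    Finsupp.prod_fintype _ _ (fun _ ↦ pow_zero _), Fin.prod_univ_two, ← mul_assoc, ← mul_assoc,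
    ← C_mul, div_mul_cancel₀ _ hchoose, mul_assoc]

theorem hasDecomp_binaryForm {r : ℕ} (c a b : Fin r → ℝ) (hab : ∀ j, (a j, b j) ≠ (0, 0)) :
    HasDecomp (binaryForm d (∑ j, c j • veronese d (a j) (b j))) d r := by
  refine ⟨c, a, b, hab, ?_⟩
  simp only [map_sum, map_smul, binaryForm_veronese, smul_eq_C_mul]

theorem linearIndependent_veronese (a b : Fin (d + 1) → ℝ)
    (hab : ∀ i j, i < j → a i * b j ≠ a j * b i) :
    LinearIndependent ℝ fun j ↦ veronese d (a j) (b j) := by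
  refine Matrix.linearIndependent_rows_of_det_ne_zero (A := Matrix.projVandermonde b a) ?_
  rw [Matrix.det_projVandermonde]
  exact Finset.prod_ne_zero_iff.mpr fun i _ ↦ Finset.prod_ne_zero_iff.mpr fun j hj ↦ by
    simpa only [sub_ne_zero, mul_comm] using hab i j (Finset.mem_Ioi.mp hj)

theorem veronese_neg (a b : ℝ) : veronese d (-a) (-b) = (-1 : ℝ) ^ d • veronese d a b := by
  ext i
  have hi : (-1 : ℝ) ^ d = (-1) ^ (i : ℕ) * (-1) ^ (i.rev : ℕ) := by
    rw [← pow_add, Fin.val_rev]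
    congr 1
    omega
  simp only [veronese, Pi.smul_apply, smul_eq_mul, neg_pow b, neg_pow a, hi]
  ring

end Veronese

section UpperBound

theorem exists_eq_zero_of_antiperiodic {f : ℝ → ℝ} {c : ℝ} (hf : Continuous f)
    (hc : Function.Antiperiodic f c) : ∃ x, f x = 0 := by
  have h0 : f c = -f 0 := by simpa using hc 0
  rcases le_total (f 0) 0 with h | h
  · exact mem_range_of_exists_le_of_exists_ge hf ⟨0, h⟩ ⟨c, by linarith⟩
  · exact mem_range_of_exists_le_of_exists_ge hf ⟨c, by linarith⟩ ⟨0, h⟩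

/-- The `d` points of the rational normal curve of degree `d` whose parameters lie at the angles
`φ + kπ/d`. Advancing `φ` by `π/d` permutes these points cyclically, up to sign. -/
def veroneseFan (d : ℕ) (φ : ℝ) (k : Fin d) : Fin (d + 1) → ℝ :=
  veronese d (Real.cos (φ + k * (Real.pi / d))) (Real.sin (φ + k * (Real.pi / d)))

theorem continuous_veroneseFan (d : ℕ) : Continuous (veroneseFan d) := by
  unfold veroneseFan veronese
  fun_prop

theorem linearIndependent_veroneseFan {d : ℕ} (φ : ℝ) :
    LinearIndependent ℝ (veroneseFan d φ) := by
  -- One more angle between the last and the first gives `d + 1` points, which are independent.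
  let t : Fin (d + 1) → ℝ := Fin.cons (-1 / 2) fun k : Fin d ↦ (k : ℝ)
  have ht_mono : StrictMono t := by
    refine Fin.strictMono_cons.mpr ⟨fun k ↦ ?_, fun _ _ h ↦ Nat.cast_lt.mpr h⟩
    linarith [(k : ℕ).cast_nonneg (α := ℝ)]
  refine (linearIndependent_veronese (fun j ↦ Real.cos (φ + t j * (Real.pi / d)))
    (fun j ↦ Real.sin (φ + t j * (Real.pi / d))) fun i j hij ↦ ?_).comp Fin.succ
    (Fin.succ_injective d)
  obtain ⟨k, rfl⟩ := Fin.exists_succ_eq.mpr (Fin.ne_zero_of_lt hij)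
  have hd : (0 : ℝ) < d := Nat.cast_pos.mpr k.pos
  have hgap : t k.succ - t i < d := by
    have hi : -1 / 2 ≤ t i := ht_mono.monotone (Fin.zero_le i)
    have hk : (k : ℝ) + 1 ≤ d := mod_cast k.isLt
    change (k : ℝ) - t i < d
    linarith
  have hsin : 0 < Real.sin ((t k.succ - t i) * (Real.pi / d)) := by
    refine Real.sin_pos_of_pos_of_lt_pi (mul_pos (sub_pos.mpr (ht_mono hij)) (by positivity)) ?_
    calc (t k.succ - t i) * (Real.pi / d) < d * (Real.pi / d) := by gcongr
      _ = Real.pi := mul_div_cancel₀ _ hd.ne'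
  rw [sub_mul, ← add_sub_add_left_eq_sub _ _ φ, Real.sin_sub] at hsin
  exact fun h ↦ by linarith

theorem veroneseFan_add {n : ℕ} (φ : ℝ) (k : Fin (n + 1)) :
    veroneseFan (n + 1) (φ + Real.pi / (n + 1 : ℕ)) k =
      (if k = Fin.last n then (-1 : ℝ) ^ (n + 1) else 1) •
        veroneseFan (n + 1) φ (finRotate (n + 1) k) := by
  split_ifs with hk
  · have hangle : φ + Real.pi / (n + 1 : ℕ) + k * (Real.pi / (n + 1 : ℕ)) = φ + Real.pi := by
      rw [hk, Fin.val_last]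
      push_cast
      field_simp
      ring
    rw [veroneseFan, hangle, Real.cos_add_pi, Real.sin_add_pi, veronese_neg, hk, finRotate_last,
      veroneseFan, Fin.val_zero, Nat.cast_zero, zero_mul, add_zero]
  · have hangle : φ + Real.pi / (n + 1 : ℕ) + k * (Real.pi / (n + 1 : ℕ)) =
        φ + (finRotate (n + 1) k : ℕ) * (Real.pi / (n + 1 : ℕ)) := by
      rw [coe_finRotate_of_ne_last hk]
      push_cast
      ring
    rw [one_smul, veroneseFan, hangle, veroneseFan]

theorem antiperiodic_alternatingMap_veroneseFan {n : ℕ}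
    (g : (Fin (n + 2) → ℝ) [⋀^Fin (n + 1)]→ₗ[ℝ] ℝ) :
    Function.Antiperiodic (fun φ ↦ g (veroneseFan (n + 1) φ)) (Real.pi / (n + 1 : ℕ)) := by
  intro φ
  let ε : Fin (n + 1) → ℝ := fun k ↦ if k = Fin.last n then (-1) ^ (n + 1) else 1
  have hε : ∏ k, ε k = (-1) ^ (n + 1) := Fintype.prod_ite_eq' _ _
  calc g (veroneseFan (n + 1) (φ + Real.pi / (n + 1 : ℕ)))
      = g fun k ↦ ε k • veroneseFan (n + 1) φ (finRotate (n + 1) k) :=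
        congrArg g (funext (veroneseFan_add φ))
    _ = (-1 : ℝ) ^ (n + 1) • g (veroneseFan (n + 1) φ ∘ finRotate (n + 1)) := by
        rw [← hε]
        exact g.toMultilinearMap.map_smul_univ ε _
    _ = -g (veroneseFan (n + 1) φ) := by
        rw [g.map_perm, sign_finRotate, Nat.add_sub_cancel, Units.smul_def]
        rcases n.even_or_odd with hn | hn <;> simp [hn.neg_one_pow, pow_succ]

theorem exists_mem_span_veroneseFan {d : ℕ} (hd : 0 < d) (u : Fin (d + 1) → ℝ) :
    ∃ φ, u ∈ Submodule.span ℝ (Set.range (veroneseFan d φ)) := by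
  obtain ⟨n, rfl⟩ := Nat.exists_eq_add_one.mpr hd
  let M (φ : ℝ) : Matrix (Fin (n + 2)) (Fin (n + 2)) ℝ := Fin.cons u (veroneseFan (n + 1) φ)
  have hcont : Continuous fun φ ↦ (M φ).det := by
    have := continuous_veroneseFan (n + 1)
    fun_prop
  have hanti : Function.Antiperiodic (fun φ ↦ (M φ).det) (Real.pi / (n + 1 : ℕ)) :=
    antiperiodic_alternatingMap_veroneseFan (Matrix.detRowAlternating.curryLeft u)
  obtain ⟨φ, hφ⟩ := exists_eq_zero_of_antiperiodic hcont hanti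
  refine ⟨φ, ?_⟩
  by_contra hu
  have hli := linearIndependent_finCons.mpr ⟨linearIndependent_veroneseFan φ, hu⟩
  have hunit := Matrix.linearIndependent_rows_iff_isUnit.mp hli
  exact ((Matrix.isUnit_iff_isUnit_det _).mp hunit).ne_zero hφ

theorem hasDecomp_of_isHomogeneous {f : MvPolynomial (Fin 2) ℝ} {d : ℕ} (hd : 0 < d)
    (hf : f.IsHomogeneous d) : HasDecomp f d d := by
  obtain ⟨u, rfl⟩ := exists_binaryForm_eq hf
  obtain ⟨φ, hφ⟩ := exists_mem_span_veroneseFan hd u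
  obtain ⟨c, rfl⟩ := Submodule.mem_span_range_iff_exists_fun ℝ |>.mp hφ
  refine hasDecomp_binaryForm c _ _ fun k h0 ↦ ?_
  obtain ⟨hcos, hsin⟩ := Prod.mk.inj h0
  simpa [hcos, hsin] using Real.cos_sq_add_sin_sq (φ + k * (Real.pi / d))

end UpperBound

section DirectionalDerivative

variable {σ R : Type*} [CommRing R]

/-- The derivative of polynomials in the direction `v`. -/
def dirDeriv (v : σ → R) : Derivation R (MvPolynomial σ R) (MvPolynomial σ R) :=
  mkDerivation R fun i ↦ C (v i)

theorem dirDeriv_X (v : σ → R) (i : σ) : dirDeriv v (X i) = C (v i) :=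
  mkDerivation_X R _ i

theorem dirDeriv_C_mul (v : σ → R) (c : R) (f : MvPolynomial σ R) :
    dirDeriv v (C c * f) = C c * dirDeriv v f := by
  rw [← smul_eq_C_mul, Derivation.map_smul, smul_eq_C_mul]

theorem dirDeriv_eq_sum [Fintype σ] (v : σ → R) (f : MvPolynomial σ R) :
    dirDeriv v f = ∑ i, C (v i) * pderiv i f := by
  classical
  induction f using MvPolynomial.induction_on with
  | C a => simp only [derivation_C, mul_zero, Finset.sum_const_zero]
  | add p q hp hq => simp only [map_add, hp, hq, mul_add, Finset.sum_add_distrib]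
  | mul_X p i hp =>
    have hX : ∑ j, C (v j) * (p * pderiv j (X i)) = p * C (v i) := by
      simp [pderiv_X, Pi.single_apply, mul_comm p]
    simp only [Derivation.leibniz, dirDeriv_X, smul_eq_mul, hp, mul_add, Finset.sum_add_distrib, hX,
      Finset.mul_sum, mul_left_comm (X i)]

/-- The restriction `f(w + t v)` of a polynomial `f` to a line, as a polynomial in `t`. -/
def lineRestriction (w v : σ → R) : MvPolynomial σ R →ₐ[R] Polynomial R :=
  aeval fun i ↦ Polynomial.C (w i) + Polynomial.C (v i) * Polynomial.X

theorem eval_lineRestriction (w v : σ → R) (f : MvPolynomial σ R) (t : R) :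
    (lineRestriction w v f).eval t = eval (w + t • v) f := by
  induction f using MvPolynomial.induction_on with
  | C a => simp [lineRestriction]
  | add p q hp hq => simp only [map_add, Polynomial.eval_add, hp, hq]
  | mul_X p i hp => simp [lineRestriction, ← hp, mul_comm t]

theorem derivative_lineRestriction (w v : σ → R) (f : MvPolynomial σ R) :
    (lineRestriction w v f).derivative = lineRestriction w v (dirDeriv v f) := by
  induction f using MvPolynomial.induction_on with
  | C a => simp [lineRestriction, dirDeriv]
  | add p q hp hq => simp only [map_add, hp, hq]
  | mul_X p i hp =>
    simp only [map_mul, Polynomial.derivative_mul, hp, Derivation.leibniz, map_add, smul_eq_mul]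
    simp only [lineRestriction, dirDeriv_X, aeval_X, aeval_C, Polynomial.algebraMap_eq,
      Polynomial.derivative_add, Polynomial.derivative_mul, Polynomial.derivative_C,
      Polynomial.derivative_X]
    ring

theorem eval_self_dirDeriv [Finite σ] {f : MvPolynomial σ R} {d : ℕ} (hf : f.IsHomogeneous d)
    (v : σ → R) : eval v (dirDeriv v f) = d * eval v f := by
  cases nonempty_fintype σ
  simpa [dirDeriv_eq_sum] using congrArg (eval v) hf.sum_X_mul_pderiv

theorem isHomogeneous_dirDeriv [Finite σ] {f : MvPolynomial σ R} {d : ℕ} (hf : f.IsHomogeneous d)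
    (v : σ → R) : (dirDeriv v f).IsHomogeneous (d - 1) := by
  cases nonempty_fintype σ
  rw [dirDeriv_eq_sum]
  exact IsHomogeneous.sum _ _ _ fun i _ ↦ by simpa using (isHomogeneous_C σ (v i)).mul hf.pderiv

end DirectionalDerivative

section ProjectiveRoots

open Projectivization

variable {f : MvPolynomial (Fin 2) ℝ} {d : ℕ}

theorem eval_smul_of_isHomogeneous {σ R : Type*} [CommSemiring R] {f : MvPolynomial σ R} {d : ℕ}
    (hf : f.IsHomogeneous d) (c : R) (v : σ → R) : eval (c • v) f = c ^ d * eval v f := by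
  rw [eval_eq, eval_eq, Finset.mul_sum]
  refine Finset.sum_congr rfl fun m hm ↦ ?_
  have hdeg : ∑ i ∈ m.support, m i = d := by
    simpa [Finsupp.weight_apply, Finsupp.sum] using hf (mem_support_iff.mp hm)
  simp only [Pi.smul_apply, smul_eq_mul, mul_pow, Finset.prod_mul_distrib,
    Finset.prod_pow_eq_pow_sum, hdeg]
  ring

theorem mk_mem_projRoots_iff (hf : f.IsHomogeneous d) {v : Fin 2 → ℝ} (hv : v ≠ 0) :
    mk ℝ v hv ∈ projRoots f ↔ eval v f = 0 := by
  obtain ⟨c, hc⟩ := exists_smul_eq_mk_rep ℝ v hv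
  rw [projRoots, Set.mem_ofPred_eq, ← hc, Units.smul_def, eval_smul_of_isHomogeneous hf]
  simp

theorem mk_eq_mk_iff_mul_eq_mul {u w : Fin 2 → ℝ} (hu : u ≠ 0) (hw : w ≠ 0) :
    mk ℝ u hu = mk ℝ w hw ↔ u 0 * w 1 = u 1 * w 0 := by
  rw [mk_eq_mk_iff']
  constructor
  · rintro ⟨c, rfl⟩
    simp only [Pi.smul_apply, smul_eq_mul]
    ring
  · intro h
    obtain ⟨i, hi⟩ := Function.ne_iff.mp hw
    refine ⟨u i / w i, funext fun j ↦ ?_⟩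
    rw [Pi.smul_apply, smul_eq_mul, div_mul_eq_mul_div, div_eq_iff hi]
    fin_cases i <;> fin_cases j <;> simp only [Fin.zero_eta, Fin.mk_one, Fin.isValue] <;> linarith

theorem sq_add_sq_pos_of_ne_zero {v : Fin 2 → ℝ} (hv : v ≠ 0) : 0 < v 0 ^ 2 + v 1 ^ 2 := by
  obtain ⟨i, hi⟩ := Function.ne_iff.mp hv
  fin_cases i
  · have h0 : v 0 ≠ 0 := hi
    positivity
  · have h1 : v 1 ≠ 0 := hi
    positivity

/-- The affine chart `t ↦ [v⊥ + t v]` of the projective line around the point at infinity `[v]`. -/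
def lineChart (v : Fin 2 → ℝ) (hv : v ≠ 0) (t : ℝ) :
    Projectivization ℝ (Fin 2 → ℝ) :=
  mk ℝ (![-v 1, v 0] + t • v) fun h ↦ by
    have h0 : -v 1 + t * v 0 = 0 := congrFun h 0
    have h1 : v 0 + t * v 1 = 0 := congrFun h 1
    exact (sq_add_sq_pos_of_ne_zero hv).ne' (by linear_combination v 0 * h1 - v 1 * h0)

theorem lineChart_eq_mk_iff {v w : Fin 2 → ℝ} (hv : v ≠ 0) (hw : w ≠ 0) (t : ℝ) :
    lineChart v hv t = mk ℝ w hw ↔ (-v 1 + t * v 0) * w 1 = (v 0 + t * v 1) * w 0 :=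
  mk_eq_mk_iff_mul_eq_mul _ hw

theorem lineChart_injective {v : Fin 2 → ℝ} (hv : v ≠ 0) :
    Function.Injective (lineChart v hv) := fun s t h ↦ by
  have h' : (-v 1 + s * v 0) * (v 0 + t * v 1) = (v 0 + s * v 1) * (-v 1 + t * v 0) :=
    (lineChart_eq_mk_iff hv _ s).mp h
  refine mul_right_cancel₀ (sq_add_sq_pos_of_ne_zero hv).ne' ?_
  linear_combination h'

theorem range_lineChart {v : Fin 2 → ℝ} (hv : v ≠ 0) :
    Set.range (lineChart v hv) = {mk ℝ v hv}ᶜ := by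
  ext p
  constructor
  · rintro ⟨t, rfl⟩ h
    have h' := (lineChart_eq_mk_iff hv hv t).mp h
    exact (sq_add_sq_pos_of_ne_zero hv).ne' (by linear_combination -h')
  · induction p using Projectivization.ind with | h w hw
    rw [Set.mem_compl_singleton_iff, Ne, mk_eq_mk_iff_mul_eq_mul]
    intro h
    have hcross : w 1 * v 0 - w 0 * v 1 ≠ 0 := fun h' ↦ h (by linarith)
    refine ⟨(w 0 * v 0 + w 1 * v 1) / (w 1 * v 0 - w 0 * v 1), (lineChart_eq_mk_iff ..).mpr ?_⟩
    linear_combination div_mul_cancel₀ (w 0 * v 0 + w 1 * v 1) hcross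

theorem lineChart_mem_projRoots_iff (hf : f.IsHomogeneous d) {v : Fin 2 → ℝ} (hv : v ≠ 0)
    (t : ℝ) : lineChart v hv t ∈ projRoots f ↔ (lineRestriction ![-v 1, v 0] v f).IsRoot t := by
  rw [lineChart, mk_mem_projRoots_iff hf, Polynomial.IsRoot, eval_lineRestriction]

theorem lineRestriction_ne_zero (hf : f.IsHomogeneous d) (hf0 : f ≠ 0) {v : Fin 2 → ℝ}
    (hv : v ≠ 0) : lineRestriction ![-v 1, v 0] v f ≠ 0 := by
  intro h0
  have hlin : lin (v 1) (-v 0) ≠ 0 := lin_ne_zero_iff.mpr fun h ↦ hv <| by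
    ext i
    fin_cases i <;> simp_all
  refine mul_ne_zero hf0 hlin (MvPolynomial.funext fun w ↦ ?_)
  rw [map_mul, eval_lin, map_zero]
  by_cases hw : v 1 * w 0 + -v 0 * w 1 = 0
  · rw [hw, mul_zero]
  have hw0 : w ≠ 0 := fun h ↦ hw (by simp [h])
  obtain ⟨t, ht⟩ : mk ℝ w hw0 ∈ Set.range (lineChart v hv) := by
    rw [range_lineChart, Set.mem_compl_singleton_iff, Ne, mk_eq_mk_iff_mul_eq_mul]
    exact fun h ↦ hw (by linear_combination h)
  have hroot : mk ℝ w hw0 ∈ projRoots f := by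
    rw [← ht, lineChart_mem_projRoots_iff hf, h0]
    exact Polynomial.eval_zero
  rw [(mk_mem_projRoots_iff hf hw0).mp hroot, zero_mul]

theorem encard_projRoots_sdiff (hf : f.IsHomogeneous d) (hf0 : f ≠ 0) {v : Fin 2 → ℝ}
    (hv : v ≠ 0) : (projRoots f \ {mk ℝ v hv}).encard =
      (lineRestriction ![-v 1, v 0] v f).roots.toFinset.card := by
  have h : projRoots f \ {mk ℝ v hv} =
      lineChart v hv '' (lineRestriction ![-v 1, v 0] v f).roots.toFinset := by
    rw [Set.sdiff_eq, ← range_lineChart, ← Set.image_preimage_eq_inter_range]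
    congr 1
    ext t
    simp [lineChart_mem_projRoots_iff hf, lineRestriction_ne_zero hf hf0 hv]
  rw [h, (lineChart_injective hv).encard_image, Set.encard_coe_eq_coe_finsetCard]

theorem encard_projRoots_le_dirDeriv (hf : f.IsHomogeneous d) (hf0 : f ≠ 0)
    {v : Fin 2 → ℝ} (hv : v ≠ 0) (hfv : dirDeriv v f ≠ 0) :
    (projRoots f).encard ≤ (projRoots (dirDeriv v f)).encard + 1 := by
  have hg := isHomogeneous_dirDeriv hf v
  have hfin : (projRoots f \ {mk ℝ v hv}).encard ≤
      (projRoots (dirDeriv v f) \ {mk ℝ v hv}).encard + 1 := by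
    rw [encard_projRoots_sdiff hf hf0, encard_projRoots_sdiff hg hfv, ← derivative_lineRestriction]
    exact_mod_cast Polynomial.card_roots_toFinset_le_derivative _
  have hinf : mk ℝ v hv ∈ projRoots f → mk ℝ v hv ∈ projRoots (dirDeriv v f) := by
    rw [mk_mem_projRoots_iff hf, mk_mem_projRoots_iff hg, eval_self_dirDeriv hf]
    exact fun h ↦ by rw [h, mul_zero]
  by_cases hp : mk ℝ v hv ∈ projRoots f
  · rw [← Set.encard_sdiff_singleton_add_one hp, ← Set.encard_sdiff_singleton_add_one (hinf hp)]
    gcongr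
  · rw [Set.sdiff_singleton_eq_self hp] at hfin
    exact hfin.trans (by gcongr; exact Set.sdiff_subset)

theorem encard_projRoots_le_one_of_dirDeriv_eq_zero (hf : f.IsHomogeneous d) (hf0 : f ≠ 0)
    {v : Fin 2 → ℝ} (hv : v ≠ 0) (hfv : dirDeriv v f = 0) : (projRoots f).encard ≤ 1 := by
  have hconst : (lineRestriction ![-v 1, v 0] v f).natDegree = 0 :=
    Polynomial.derivative_eq_zero.mp (by rw [derivative_lineRestriction, hfv, map_zero])
  have hempty : projRoots f \ {mk ℝ v hv} = ∅ := by
    rw [← Set.encard_eq_zero, encard_projRoots_sdiff hf hf0,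
      Polynomial.eq_C_of_natDegree_eq_zero hconst, Polynomial.roots_C]
    rfl
  rw [← Set.encard_singleton (mk ℝ v hv)]
  exact Set.encard_le_encard (Set.sdiff_eq_empty.mp hempty)

end ProjectiveRoots

theorem dirDeriv_lin_pow (v : Fin 2 → ℝ) (a b : ℝ) (d : ℕ) :
    dirDeriv v (lin a b ^ (d + 1)) = C ((d + 1) * (a * v 0 + b * v 1)) * lin a b ^ d := by
  have hlin : dirDeriv v (lin a b) = C (a * v 0 + b * v 1) := by
    simp only [lin, map_add, dirDeriv_C_mul, dirDeriv_X, MvPolynomial.C_mul]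
  rw [Derivation.leibniz_pow, hlin, Nat.add_sub_cancel, smul_eq_mul, nsmul_eq_mul,
    ← Nat.cast_add_one, MvPolynomial.C_mul, map_natCast]
  ring

theorem HasDecomp.exists_dirDeriv {f : MvPolynomial (Fin 2) ℝ} {d r : ℕ}
    (h : HasDecomp f (d + 1) (r + 1)) : ∃ v ≠ 0, HasDecomp (dirDeriv v f) d r := by
  obtain ⟨c, a, b, hab, rfl⟩ := h
  let v : Fin 2 → ℝ := ![b 0, -a 0]
  refine ⟨v, fun h0 ↦ hab 0 ?_, fun j ↦ c j.succ * ((d + 1) * (a j.succ * v 0 + b j.succ * v 1)),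
    fun j ↦ a j.succ, fun j ↦ b j.succ, fun j ↦ hab j.succ, ?_⟩
  · simpa [v, and_comm] using h0
  · have hzero : a 0 * v 0 + b 0 * v 1 = 0 := by simp [v, mul_comm]
    simp only [Fin.sum_univ_succ, map_add, map_sum, dirDeriv_C_mul, dirDeriv_lin_pow, hzero,
      mul_zero, map_zero, zero_mul, zero_add, MvPolynomial.C_mul, mul_assoc]

theorem projRoots_eq_empty_of_isHomogeneous_zero {f : MvPolynomial (Fin 2) ℝ}
    (hf : f.IsHomogeneous 0) (hf0 : f ≠ 0) : projRoots f = ∅ := by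
  obtain ⟨c, rfl⟩ : ∃ c, f = C c :=
    ⟨_, totalDegree_eq_zero_iff_eq_C.mp ((totalDegree_zero_iff_isHomogeneous _).mpr hf)⟩
  ext p
  simpa only [projRoots, Set.mem_ofPred_eq, eval_C, Set.mem_empty_iff_false, iff_false] using
    C_ne_zero.mp hf0

theorem HasDecomp.encard_projRoots_le {f : MvPolynomial (Fin 2) ℝ} {d r : ℕ} (h : HasDecomp f d r)
    (hf : f ≠ 0) : (projRoots f).encard ≤ r := by
  induction r generalizing d f with
  | zero =>
    obtain ⟨c, a, b, -, rfl⟩ := h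
    exact absurd Finset.sum_empty hf
  | succ r ih =>
    cases d with
    | zero => simp [projRoots_eq_empty_of_isHomogeneous_zero h.isHomogeneous hf]
    | succ d =>
      obtain ⟨v, hv, hg⟩ := h.exists_dirDeriv
      rw [Nat.cast_add_one]
      by_cases hfv : dirDeriv v f = 0
      · exact (encard_projRoots_le_one_of_dirDeriv_eq_zero h.isHomogeneous hf hv hfv).trans
          le_add_self
      · exact (encard_projRoots_le_dirDeriv h.isHomogeneous hf hv hfv).trans (by grw [ih hg hfv])

namespace SplitsDistinct

variable {f : MvPolynomial (Fin 2) ℝ} {d : ℕ}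

theorem ne_zero (h : SplitsDistinct f d) : f ≠ 0 := by
  obtain ⟨a, b, hab, -, rfl⟩ := h
  exact Finset.prod_ne_zero_iff.mpr fun j _ ↦ lin_ne_zero_iff.mpr (hab j)

theorem isHomogeneous (h : SplitsDistinct f d) : f.IsHomogeneous d := by
  obtain ⟨a, b, -, -, rfl⟩ := h
  simpa using IsHomogeneous.prod Finset.univ (fun j ↦ lin (a j) (b j)) (fun _ ↦ 1)
    fun j _ ↦ isHomogeneous_lin (a j) (b j)

theorem le_encard_projRoots (h : SplitsDistinct f d) : d ≤ (projRoots f).encard := by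
  have hf := h.isHomogeneous
  obtain ⟨a, b, hab, hdist, rfl⟩ := h
  have hne (j) : ![b j, -a j] ≠ 0 := fun h0 ↦ hab j (by simpa [and_comm] using h0)
  let root (j : Fin d) := Projectivization.mk ℝ _ (hne j)
  have hinj : Function.Injective root := by
    intro i j hij
    by_contra h
    exact hdist i j h (by simpa [root, mk_eq_mk_iff_mul_eq_mul, mul_comm] using hij.symm)
  have hroots : Set.range root ⊆ projRoots (∏ j, lin (a j) (b j)) := by
    rintro _ ⟨j, rfl⟩
    rw [mk_mem_projRoots_iff hf, map_prod]
    exact Finset.prod_eq_zero (Finset.mem_univ j) (by simp [eval_lin, mul_comm])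
  calc (d : ℕ∞) = (Set.range root).encard := by
        rw [← Set.image_univ, hinj.encard_image, Set.encard_univ, ENat.card_eq_coe_fintype_card,
          Fintype.card_fin]
    _ ≤ _ := Set.encard_le_encard hroots

theorem realRank_eq (hd : 0 < d) (h : SplitsDistinct f d) : realRank f d = d := by
  have hle := hasDecomp_of_isHomogeneous hd h.isHomogeneous
  refine hle.realRank_le.antisymm ?_
  have hrank : HasDecomp f d (realRank f d) := Nat.sInf_mem (s := {r | HasDecomp f d r}) ⟨d, hle⟩
  exact_mod_cast h.le_encard_projRoots.trans (hrank.encard_projRoots_le h.ne_zero)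

end SplitsDistinct

section NonrealRoot

variable {f : MvPolynomial (Fin 2) ℝ} {d : ℕ}

theorem exists_homogenize_eq_prod_lin {p : Polynomial ℝ} (hp : p.Splits) (hd : p.natDegree ≤ d) :
    ∃ (c : ℝ) (a b : Fin d → ℝ), p.homogenize d = C c * ∏ j, lin (a j) (b j) := by
  induction d generalizing p with
  | zero =>
    rw [Polynomial.eq_C_of_natDegree_le_zero hd]
    exact ⟨p.coeff 0, 0, 0, by simp⟩
  | succ d ih =>
    suffices h : ∃ (q : Polynomial ℝ) (a b : ℝ), q.Splits ∧ q.natDegree ≤ d ∧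
        p.homogenize (d + 1) = lin a b * q.homogenize d by
      obtain ⟨q, a₀, b₀, hq, hqd, hpq⟩ := h
      obtain ⟨c, a, b, h⟩ := ih hq hqd
      refine ⟨c, Fin.cons a₀ a, Fin.cons b₀ b, ?_⟩
      simp only [hpq, h, Fin.prod_univ_succ, Fin.cons_zero, Fin.cons_succ, mul_left_comm]
    rcases hd.lt_or_eq with hlt | heq
    · refine ⟨p, 0, 1, hp, Nat.lt_succ_iff.mp hlt, ?_⟩
      have h := Polynomial.homogenize_mul 1 p (Polynomial.natDegree_one.trans_le zero_le_one)
        (Nat.lt_succ_iff.mp hlt)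
      simpa [lin, add_comm] using h
    · obtain ⟨r, hr⟩ := hp.exists_eval_eq_zero (by
        rw [Polynomial.degree_eq_natDegree (by rintro rfl; simp at heq), heq]
        exact_mod_cast d.succ_ne_zero)
      obtain ⟨q, rfl⟩ := Polynomial.dvd_iff_isRoot.mpr hr
      have hne : (Polynomial.X - Polynomial.C r) * q ≠ 0 := by rintro h; simp [h] at heq
      have hqd : q.natDegree = d := by
        rw [Polynomial.natDegree_mul (left_ne_zero_of_mul hne) (right_ne_zero_of_mul hne),
          Polynomial.natDegree_X_sub_C] at heq
        lia
      refine ⟨q, 1, -r, hp.of_dvd hne (dvd_mul_left _ _), hqd.le, ?_⟩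
      have h := Polynomial.homogenize_mul (Polynomial.X - Polynomial.C r) q
        (Polynomial.natDegree_X_sub_C r).le hqd.le
      simpa [lin, add_comm, sub_eq_add_neg] using h

theorem exists_eq_prod_lin_of_forall_im_eq_zero (hd : 0 < d) (hf : f.IsHomogeneous d)
    (hreal : ∀ z : ℂ, aeval ![z, 1] f = 0 → z.im = 0) :
    ∃ a b : Fin d → ℝ, f = ∏ j, lin (a j) (b j) := by
  let p : Polynomial ℝ := aeval ![Polynomial.X, 1] f
  have hpf : p.homogenize d = f := Polynomial.homogenize_eq_of_isHomogeneous hf rfl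
  have hdeg : p.natDegree ≤ d := by
    simpa only [mul_one] using aeval_natDegree_le (n := 1) f hf.totalDegree_le
      ![Polynomial.X, 1] fun i ↦ by fin_cases i <;> simp
  have hsplit : p.Splits := by
    refine .of_splits_map (algebraMap ℝ ℂ) (IsAlgClosed.splits _) fun z hz ↦ ?_
    have hroot : aeval ![z, 1] f = 0 := by
      rw [← hpf, Polynomial.aeval_homogenize_of_eq_one hdeg _ rfl]
      simpa only [Polynomial.IsRoot, Polynomial.eval_map_algebraMap, Matrix.cons_val_zero] using
        Polynomial.isRoot_of_mem_roots hz
    exact ⟨z.re, Complex.ext rfl (hreal z hroot).symm⟩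
  obtain ⟨c, a, b, h⟩ := exists_homogenize_eq_prod_lin hsplit hdeg
  obtain ⟨n, rfl⟩ := Nat.exists_eq_succ_of_ne_zero hd.ne'
  refine ⟨Fin.cons (c * a 0) (Fin.tail a), Fin.cons (c * b 0) (Fin.tail b), ?_⟩
  rw [← hpf, h, Fin.prod_univ_succ, Fin.prod_univ_succ, ← mul_assoc, C_mul_lin]
  rfl

theorem lin_dvd_lin {a b a' b' : ℝ} (hab : (a, b) ≠ (0, 0)) (h : a * b' = a' * b) :
    lin a b ∣ lin a' b' := by
  have hne : a ^ 2 + b ^ 2 ≠ 0 := fun h0 ↦ hab (by ext <;> nlinarith)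
  refine ⟨C ((a * a' + b * b') / (a ^ 2 + b ^ 2)), ?_⟩
  rw [mul_comm, C_mul_lin]
  congr 1 <;> rw [div_mul_eq_mul_div, eq_div_iff hne]
  · linear_combination -b * h
  · linear_combination a * h

theorem splitsDistinct_of_squarefree {a b : Fin d → ℝ}
    (hsf : Squarefree (∏ j, lin (a j) (b j))) :
    SplitsDistinct (∏ j, lin (a j) (b j)) d := by
  have hab (j : Fin d) : (a j, b j) ≠ (0, 0) :=
    lin_ne_zero_iff.mp (Finset.prod_ne_zero_iff.mp hsf.ne_zero j (Finset.mem_univ j))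
  refine ⟨a, b, hab, fun i j hij h ↦ ?_, rfl⟩
  have hdvd : lin (a i) (b i) * lin (a i) (b i) ∣ ∏ k, lin (a k) (b k) :=
    calc lin (a i) (b i) * lin (a i) (b i)
      _ ∣ lin (a i) (b i) * lin (a j) (b j) := mul_dvd_mul_left _ (lin_dvd_lin (hab i) h)
      _ = ∏ k ∈ {i, j}, lin (a k) (b k) :=
        (Finset.prod_pair (f := fun k ↦ lin (a k) (b k)) hij).symm
      _ ∣ ∏ k, lin (a k) (b k) :=
        Finset.prod_dvd_prod_of_subset _ _ _ (Finset.subset_univ _)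
  exact not_isUnit_lin (a i) (b i) (hsf _ hdvd)

theorem exists_root_im_ne_zero (hd : 0 < d) (hf : f.IsHomogeneous d) (hsf : Squarefree f)
    (hns : ¬SplitsDistinct f d) : ∃ z : ℂ, z.im ≠ 0 ∧ aeval ![z, 1] f = 0 := by
  by_contra! hreal
  obtain ⟨a, b, rfl⟩ := exists_eq_prod_lin_of_forall_im_eq_zero hd hf
    fun z hz ↦ by_contra fun him ↦ hreal z him hz
  exact hns (splitsDistinct_of_squarefree hsf)

end NonrealRoot

section Prony

theorem exists_add_mul_eq_of_discrim_pos {a b c : ℝ} (ha : a ≠ 0) (h : 0 < discrim a b c) :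
    ∃ m n : ℝ, m ≠ n ∧ a * (m + n) = -b ∧ a * (m * n) = c := by
  set w := √(discrim a b c)
  have hw : w ^ 2 = b ^ 2 - 4 * a * c := Real.sq_sqrt h.le
  refine ⟨(-b + w) / (2 * a), (-b - w) / (2 * a), fun hmn ↦ ?_, by field_simp; ring, ?_⟩
  · rw [div_left_inj' (by positivity)] at hmn
    linarith [Real.sqrt_pos.mpr h]
  · field_simp
    linear_combination -hw

/- The parameters `m` and `n` are the roots of the quadratic polynomial that annihilates the
sequence `p, q, r, s`, viewed as a linear recurrence of order two. -/
theorem exists_eq_two_exponential_sum {p q r s : ℝ} (h₁ : p * r - q ^ 2 ≠ 0)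
    (h₂ : q * s - r ^ 2 ≠ 0)
    (hD : 0 < discrim (p * r - q ^ 2) (-(p * s - q * r)) (q * s - r ^ 2)) :
    ∃ l k m n : ℝ, m ≠ 0 ∧ n ≠ 0 ∧ p = l + k ∧ q = l * m + k * n ∧
      r = l * m ^ 2 + k * n ^ 2 ∧ s = l * m ^ 3 + k * n ^ 3 := by
  obtain ⟨m, n, hmn, hadd, hmul⟩ := exists_add_mul_eq_of_discrim_pos h₁ hD
  have hmn0 : m * n ≠ 0 := right_ne_zero_of_mul (hmul.trans_ne h₂)
  have hr : r = (m + n) * q - m * n * p :=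
    mul_left_cancel₀ h₁ (by linear_combination -q * hadd + p * hmul)
  have hs : s = (m + n) * r - m * n * q :=
    mul_left_cancel₀ h₁ (by linear_combination -r * hadd + q * hmul)
  obtain ⟨l, k, hp, hq⟩ : ∃ l k : ℝ, p = l + k ∧ q = l * m + k * n := by
    have hsub : m - n ≠ 0 := sub_ne_zero.mpr hmn
    refine ⟨(q - n * p) / (m - n), (m * p - q) / (m - n), ?_, ?_⟩ <;> field_simp <;> ring
  refine ⟨l, k, m, n, left_ne_zero_of_mul hmn0, right_ne_zero_of_mul hmn0, hp, hq, ?_, ?_⟩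
  · rw [hr, hp, hq]; ring
  · rw [hs, hr, hp, hq]; ring

theorem discrim_hessian_pos_of_pos_left {p q r s : ℝ} (h : 0 < p * r - q ^ 2) :
    0 < discrim (p * r - q ^ 2) (-(p * s - q * r)) (q * s - r ^ 2) := by
  refine pos_of_mul_pos_right (a := p ^ 2) ?_ (sq_nonneg p)
  calc 0 < (p ^ 2 * s - 3 * p * q * r + 2 * q ^ 3) ^ 2 + 4 * (p * r - q ^ 2) ^ 3 := by positivity
    _ = p ^ 2 * discrim (p * r - q ^ 2) (-(p * s - q * r)) (q * s - r ^ 2) := by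
      rw [discrim]; ring

theorem discrim_hessian_pos {p q r s : ℝ} (h : 0 < (p * r - q ^ 2) + (q * s - r ^ 2)) :
    0 < discrim (p * r - q ^ 2) (-(p * s - q * r)) (q * s - r ^ 2) := by
  rcases lt_or_ge 0 (p * r - q ^ 2) with h₁ | h₁
  · exact discrim_hessian_pos_of_pos_left h₁
  · have h₂ : 0 < s * q - r ^ 2 := by linarith
    refine (discrim_hessian_pos_of_pos_left (s := p) h₂).trans_eq ?_
    simp only [discrim]
    ring

theorem hasDecomp_binaryForm_four {u : Fin 6 → ℝ} (h₁ : u 1 * u 3 - u 2 ^ 2 ≠ 0)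
    (h₂ : u 2 * u 4 - u 3 ^ 2 ≠ 0) (h : 0 < (u 1 * u 3 - u 2 ^ 2) + (u 2 * u 4 - u 3 ^ 2)) :
    HasDecomp (binaryForm 5 u) 5 4 := by
  obtain ⟨l, k, m, n, hm, hn, hp, hq, hr, hs⟩ :=
    exists_eq_two_exponential_sum h₁ h₂ (discrim_hessian_pos h)
  have hdecomp := hasDecomp_binaryForm (d := 5)
    ![l / m, k / n, u 0 - l / m - k / n, u 5 - l * m ^ 4 - k * n ^ 4] ![1, 1, 1, 0] ![m, n, 0, 1]
    fun j ↦ by fin_cases j <;> simp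
  convert hdecomp
  ext i
  fin_cases i <;> simp [Fin.sum_univ_four, veronese, Fin.rev, hp, hq, hr, hs]
  all_goals field_simp
  ring

end Prony

section Rotation

variable {R S : Type*} [CommRing R] [CommRing S]

/-- The coefficients of the binary cubic `h(x - t y, t x + y)`, where `h` is the binary cubic
`a x³ + b x² y + c x y² + d y³`. -/
def rotateCubic (t : R) (h : Cubic R) : Cubic R where
  a := h.a + h.b * t + h.c * t ^ 2 + h.d * t ^ 3
  b := h.b + (2 * h.c - 3 * h.a) * t + (3 * h.d - 2 * h.b) * t ^ 2 - h.c * t ^ 3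
  c := h.c + (3 * h.d - 2 * h.b) * t + (3 * h.a - 2 * h.c) * t ^ 2 + h.b * t ^ 3
  d := h.d - h.c * t + h.b * t ^ 2 - h.a * t ^ 3

/-- The Hankel minor `u₁ u₃ - u₂²` of the scaled coefficients `u` of the quintic
`10 (x² + y²) h`, where `h` is the binary cubic `a x³ + b x² y + c x y² + d y³`. -/
def lowerMinor (h : Cubic R) : R := 2 * h.b * (h.b + h.d) - (h.a + h.c) ^ 2

/-- The Hankel minor `u₂ u₄ - u₃²` of the scaled coefficients `u` of the quintic
`10 (x² + y²) h`, where `h` is the binary cubic `a x³ + b x² y + c x y² + d y³`. -/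
def upperMinor (h : Cubic R) : R := 2 * h.c * (h.a + h.c) - (h.b + h.d) ^ 2

theorem map_lowerMinor_rotateCubic (φ : R →+* S) (t : R) (h : Cubic R) :
    φ (lowerMinor (rotateCubic t h)) = lowerMinor (rotateCubic (φ t) (h.map φ)) := by
  simp [lowerMinor, rotateCubic, Cubic.map, map_ofNat]

theorem map_upperMinor_rotateCubic (φ : R →+* S) (t : R) (h : Cubic R) :
    φ (upperMinor (rotateCubic t h)) = upperMinor (rotateCubic (φ t) (h.map φ)) := by
  simp [upperMinor, rotateCubic, Cubic.map, map_ofNat]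

theorem lowerMinor_rotateCubic_of_sq_eq_neg_one {i : R} (hi : i ^ 2 = -1) (h : Cubic R) :
    lowerMinor (rotateCubic i h) = -16 * ((h.a - h.c) + i * (h.b - h.d)) ^ 2 := by
  have hi3 : i ^ 3 = -i := by rw [pow_succ, hi, neg_one_mul]
  simp only [lowerMinor, rotateCubic, hi, hi3]
  linear_combination 12 * ((h.a - h.c) ^ 2 + (h.b - h.d) ^ 2) * hi

theorem upperMinor_rotateCubic_of_sq_eq_neg_one {i : R} (hi : i ^ 2 = -1) (h : Cubic R) :
    upperMinor (rotateCubic i h) = 16 * ((h.a - h.c) + i * (h.b - h.d)) ^ 2 := by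
  have hi3 : i ^ 3 = -i := by rw [pow_succ, hi, neg_one_mul]
  simp only [upperMinor, rotateCubic, hi, hi3]
  linear_combination -4 * ((h.a - h.c) ^ 2 + (h.b - h.d) ^ 2) * hi

/-- The product `lowerMinor * upperMinor` of the rotated cubic, as a polynomial in the rotation
parameter. -/
def minorProduct (h : Cubic R) : Polynomial R :=
  lowerMinor (rotateCubic Polynomial.X (h.map Polynomial.C)) *
    upperMinor (rotateCubic Polynomial.X (h.map Polynomial.C))

theorem aeval_minorProduct [Algebra R S] (h : Cubic R) (t : S) :
    Polynomial.aeval t (minorProduct h) =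
      lowerMinor (rotateCubic t (h.map (algebraMap R S))) *
        upperMinor (rotateCubic t (h.map (algebraMap R S))) := by
  have hmap : (h.map Polynomial.C).map (Polynomial.aeval t).toRingHom =
      h.map (algebraMap R S) := by
    ext <;> exact Polynomial.aeval_C _ _
  have hlower := map_lowerMinor_rotateCubic (Polynomial.aeval (R := R) t).toRingHom
    Polynomial.X (h.map Polynomial.C)
  have hupper := map_upperMinor_rotateCubic (Polynomial.aeval (R := R) t).toRingHom
    Polynomial.X (h.map Polynomial.C)
  rw [hmap] at hlower hupper
  simpa [minorProduct] using congrArg₂ (· * ·) hlower hupper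

variable {h : Cubic ℝ}

theorem minorProduct_ne_zero (hne : h.a ≠ h.c ∨ h.b ≠ h.d) : minorProduct h ≠ 0 := by
  intro h0
  have hI := aeval_minorProduct h Complex.I
  rw [h0, map_zero, lowerMinor_rotateCubic_of_sq_eq_neg_one Complex.I_sq,
    upperMinor_rotateCubic_of_sq_eq_neg_one Complex.I_sq] at hI
  have hK : ((h.a - h.c : ℝ) : ℂ) + Complex.I * ((h.b - h.d : ℝ) : ℂ) = 0 := by
    simpa [Cubic.map] using hI.symm
  have hre : h.a = h.c := by simpa [sub_eq_zero] using congrArg Complex.re hK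
  have him : h.b = h.d := by simpa [sub_eq_zero] using congrArg Complex.im hK
  exact hne.elim (· hre) (· him)

theorem exists_lowerMinor_add_upperMinor_pos (hne : h.a ≠ h.c ∨ h.b ≠ h.d) :
    ∃ t, 0 < lowerMinor (rotateCubic t h) + upperMinor (rotateCubic t h) := by
  have hsum : 0 < (h.a - h.c) ^ 2 + (h.b - h.d) ^ 2 := by
    rcases hne with hac | hbd
    · have := sub_ne_zero.mpr hac; positivity
    · have := sub_ne_zero.mpr hbd; positivity
  by_contra! hle
  have h0 := hle 0
  have h1 := hle 1
  simp only [lowerMinor, upperMinor, rotateCubic] at h0 h1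
  linarith

theorem exists_rotateCubic_minors (hne : h.a ≠ h.c ∨ h.b ≠ h.d) :
    ∃ t, lowerMinor (rotateCubic t h) ≠ 0 ∧ upperMinor (rotateCubic t h) ≠ 0 ∧
      0 < lowerMinor (rotateCubic t h) + upperMinor (rotateCubic t h) := by
  have hopen : IsOpen {t | 0 < lowerMinor (rotateCubic t h) + upperMinor (rotateCubic t h)} := by
    refine isOpen_lt continuous_const ?_
    unfold lowerMinor upperMinor rotateCubic
    fun_prop
  have hdense : Dense {t | (minorProduct h).IsRoot t}ᶜ :=
    (Polynomial.finite_setOfPred_isRoot (minorProduct_ne_zero hne)).countable.dense_compl ℝ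
  obtain ⟨t, ht, hpos⟩ :=
    hdense.exists_mem_open hopen (exists_lowerMinor_add_upperMinor_pos hne)
  have hprod : lowerMinor (rotateCubic t h) * upperMinor (rotateCubic t h) ≠ 0 :=
    (aeval_minorProduct h t).symm.trans_ne ht
  exact ⟨t, left_ne_zero_of_mul hprod, right_ne_zero_of_mul hprod, hpos⟩

end Rotation

section QuinticWithRootI

/-- The binary form `a x³ + b x² y + c x y² + d y³`. -/
def cubicForm (h : Cubic ℝ) : MvPolynomial (Fin 2) ℝ :=
  C h.a * X 0 ^ 3 + C h.b * X 0 ^ 2 * X 1 + C h.c * X 0 * X 1 ^ 2 + C h.d * X 1 ^ 3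

theorem binaryForm_five (u : Fin 6 → ℝ) :
    binaryForm 5 u = C (u 0) * X 0 ^ 5 + C (5 * u 1) * X 0 ^ 4 * X 1 +
      C (10 * u 2) * X 0 ^ 3 * X 1 ^ 2 + C (10 * u 3) * X 0 ^ 2 * X 1 ^ 3 +
      C (5 * u 4) * X 0 * X 1 ^ 4 + C (u 5) * X 1 ^ 5 := by
  simp only [binaryForm, Fintype.linearCombination_apply, Fin.sum_univ_six, smul_eq_C_mul, Fin.rev,
    Fin.isValue, Fin.coe_ofNat_eq_mod, Nat.reduceMod, Nat.reduceAdd, Nat.reduceSub, Nat.choose,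
    Nat.cast_ofNat, Nat.cast_one, C_mul, map_ofNat, C_1]
  ring

theorem sq_add_sq_mul_cubicForm (h : Cubic ℝ) :
    (X 0 ^ 2 + X 1 ^ 2) * cubicForm h = C (1 / 10) *
      binaryForm 5 ![10 * h.a, 2 * h.b, h.a + h.c, h.b + h.d, 2 * h.c, 10 * h.d] := by
  refine MvPolynomial.funext fun v ↦ ?_
  simp only [cubicForm, binaryForm_five, map_add, map_mul, map_pow, eval_C, eval_X,
    Matrix.cons_val_zero, Matrix.cons_val_one, Matrix.cons_val]
  ring

theorem subst_sq_add_sq_mul_cubicForm (t : ℝ) (h : Cubic ℝ) :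
    subst !![1, -t; t, 1] ((X 0 ^ 2 + X 1 ^ 2) * cubicForm h) =
      C (1 + t ^ 2) * ((X 0 ^ 2 + X 1 ^ 2) * cubicForm (rotateCubic t h)) := by
  refine MvPolynomial.funext fun v ↦ ?_
  simp only [eval_subst, cubicForm, rotateCubic, map_add, map_mul, map_pow, eval_C, eval_X,
    Matrix.mulVec, dotProduct, Fin.sum_univ_two, Matrix.of_apply, Matrix.cons_val',
    Matrix.cons_val_zero, Matrix.cons_val_one, Matrix.cons_val_fin_one]
  ring

theorem hasDecomp_sq_add_sq_mul_cubicForm {h : Cubic ℝ} (hne : h.a ≠ h.c ∨ h.b ≠ h.d) :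
    HasDecomp ((X 0 ^ 2 + X 1 ^ 2) * cubicForm h) 5 4 := by
  obtain ⟨t, hlower, hupper, hpos⟩ := exists_rotateCubic_minors hne
  have hdet : (!![1, -t; t, 1] : Matrix (Fin 2) (Fin 2) ℝ).det ≠ 0 := by
    rw [Matrix.det_fin_two_of]
    nlinarith [sq_nonneg t]
  refine .of_subst hdet ?_
  rw [subst_sq_add_sq_mul_cubicForm, sq_add_sq_mul_cubicForm]
  refine (HasDecomp.C_mul (hasDecomp_binaryForm_four ?_ ?_ ?_) _).C_mul _
  · simpa [lowerMinor] using hlower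
  · simpa [upperMinor, mul_comm] using hupper
  · simpa [lowerMinor, upperMinor, mul_comm] using hpos

theorem exists_eq_sq_add_sq_mul_cubicForm {f : MvPolynomial (Fin 2) ℝ} (hf : f.IsHomogeneous 5)
    (hI : aeval ![Complex.I, 1] f = 0) : ∃ h, f = (X 0 ^ 2 + X 1 ^ 2) * cubicForm h := by
  obtain ⟨u, rfl⟩ := exists_binaryForm_eq hf
  rw [binaryForm_five] at hI ⊢
  have hI' : (5 * u 1 - 10 * u 3 + u 5 : ℝ) + (u 0 - 10 * u 2 + 5 * u 4 : ℝ) * Complex.I = 0 := by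
    simp only [map_add, map_mul, map_pow, aeval_C, aeval_X, Complex.coe_algebraMap,
      Complex.ofReal_ofNat, Matrix.cons_val_zero, Matrix.cons_val_one] at hI
    push_cast
    linear_combination hI - (u 0 * (Complex.I ^ 3 - Complex.I) + 5 * u 1 * (Complex.I ^ 2 - 1) +
      10 * u 2 * Complex.I + 10 * u 3) * Complex.I_sq
  have hre : 5 * u 1 - 10 * u 3 + u 5 = 0 := by simpa using congrArg Complex.re hI'
  have him : u 0 - 10 * u 2 + 5 * u 4 = 0 := by simpa using congrArg Complex.im hI'
  refine ⟨⟨u 0, 5 * u 1, 10 * u 2 - u 0, 10 * u 3 - 5 * u 1⟩, MvPolynomial.funext fun v ↦ ?_⟩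
  simp only [cubicForm, map_add, map_mul, map_pow, eval_C, eval_X]
  linear_combination v 0 * v 1 ^ 4 * him + v 1 ^ 5 * hre

theorem ne_or_ne_of_squarefree {h : Cubic ℝ}
    (hsf : Squarefree ((X 0 ^ 2 + X 1 ^ 2) * cubicForm h)) : h.a ≠ h.c ∨ h.b ≠ h.d := by
  by_contra! heq
  have hdvd : X 0 ^ 2 + X 1 ^ 2 ∣ cubicForm h := by
    refine ⟨lin h.a h.b, ?_⟩
    rw [cubicForm, lin, ← heq.1, ← heq.2]
    ring
  have hunit : IsUnit (X 0 ^ 2 + X 1 ^ 2 : MvPolynomial (Fin 2) ℝ) :=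
    hsf _ (mul_dvd_mul_left _ hdvd)
  simpa using hunit.map (eval (0 : Fin 2 → ℝ))

theorem hasDecomp_four_of_root_im_ne_zero {f : MvPolynomial (Fin 2) ℝ} (hf : f.IsHomogeneous 5)
    (hsf : Squarefree f) {z : ℂ} (hz : z.im ≠ 0) (hroot : aeval ![z, 1] f = 0) :
    HasDecomp f 5 4 := by
  have hdet : (!![z.im, z.re; 0, 1] : Matrix (Fin 2) (Fin 2) ℝ).det ≠ 0 := by
    simpa [Matrix.det_fin_two_of] using hz
  refine .of_subst hdet ?_
  have hI : aeval ![Complex.I, 1] (subst !![z.im, z.re; 0, 1] f) = 0 := by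
    rw [aeval_subst, ← hroot]
    congr 2
    ext i
    fin_cases i <;> apply Complex.ext <;> simp
  obtain ⟨h, hfh⟩ := exists_eq_sq_add_sq_mul_cubicForm (isHomogeneous_subst _ hf) hI
  rw [hfh]
  exact hasDecomp_sq_add_sq_mul_cubicForm
    (ne_or_ne_of_squarefree (hfh ▸ squarefree_subst hdet hsf))

end QuinticWithRootI

/-- a real binary quintic with distinct complex roots has real rank 5
iff it has five distinct real roots (is a product of five pairwise non-proportional
real linear forms). -/
theorem stmt14 (f : MvPolynomial (Fin 2) ℝ) (hf : f.IsHomogeneous 5)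
    (hsf : SquarefreeC f) :
    realRank f 5 = 5 ↔ SplitsDistinct f 5 := by
  refine ⟨fun hrank ↦ ?_, fun h ↦ h.realRank_eq (by norm_num)⟩
  by_contra hns
  obtain ⟨z, hz, hroot⟩ := exists_root_im_ne_zero (by norm_num) hf hsf.squarefree hns
  have hle : realRank f 5 ≤ 4 :=
    (hasDecomp_four_of_root_im_ne_zero hf hsf.squarefree hz hroot).realRank_le
  omega
end
end

section
/- Identify real binary quintics f = a₀x⁵ + 5a₁x⁴y + 10a₂x³y² + 10a₃x²y³ + 5a₄xy⁴ + a₅y⁵ with their coefficient vectors (a₀,…,a₅) ∈ ℝ⁶, and for each r let S_{5,r} ⊆ ℝ⁶ be the set of nonzero quintics of real rank exactly r. Then S_{5,r} has nonempty interior in ℝ⁶ if and only if r ∈ {3, 4, 5}. -/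
open MvPolynomial

noncomputable section

/-
By apolarity, a form `a` of degree `d` is a combination of the powers of the linear forms with
coefficient vectors `v i` exactly when every form of degree `d` vanishing at all `v i` pairs to zero
with `a`.

* Rank at most `d`: forms of degree `d` vanishing at `d` equally spaced directions form a line. Its
  pairing with `a` changes sign when the directions are rotated by one step, so some rotation
  makes it vanish.
* Rank `d` is typical: a combination of `d - 1` powers pairs to zero with `x * g` and `y * g` for a
  product `g` of `d - 1` nonzero real linear forms, a closed condition by compactness. It fails for
  `Re ((x + I * y) ^ d)`, where these pairings are the real parts of `g (1, I)` and `I * g (1, I)`,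
  because `g` does not vanish at `(1, I)`.
* Descent: in an interior point of rank `r + 1`, drop one summand. For `d < 2 * r` the remaining `r`
  summands are a point at which the parametrisation of sums of `r` powers is a submersion, since a
  nonzero form of degree `d` cannot vanish doubly at `r` points. So all nearby forms have rank at
  most `r`, and at least `r` since adding the dropped summand back gives rank `r + 1`.
* For `2 * r ≤ d`, a combination of `r` powers has a singular `(r + 1) × (r + 1)` catalecticant.
-/

namespace BinaryForm

/-- The exponent of the monomial `x ^ (d - i) * y ^ i`. -/
def exponent (d : ℕ) (i : Fin (d + 1)) : Fin 2 →₀ ℕ :=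
  Finsupp.single 0 (d - i : ℕ) + Finsupp.single 1 (i : ℕ)

/-- The form of degree `d` with coefficient vector `a`, in the binomially weighted convention. -/
def binaryForm (d : ℕ) : (Fin (d + 1) → ℝ) →ₗ[ℝ] MvPolynomial (Fin 2) ℝ :=
  Fintype.linearCombination ℝ fun i ↦ monomial (exponent d i) (d.choose i : ℝ)

/-- The Veronese map: the weighted coefficient vector of `(v 0 * x + v 1 * y) ^ d`. -/
def veronese (d : ℕ) (v : Fin 2 → ℝ) : Fin (d + 1) → ℝ :=
  fun i ↦ v 0 ^ (d - i : ℕ) * v 1 ^ (i : ℕ)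

/-- The apolarity pairing between weighted coefficient vectors and polynomials: on forms of degree
`d`, pairing with `veronese d v` is evaluation at `v`. -/
def apolar (d : ℕ) : (Fin (d + 1) → ℝ) →ₗ[ℝ] MvPolynomial (Fin 2) ℝ →ₗ[ℝ] ℝ :=
  Fintype.linearCombination ℝ fun i ↦ lcoeff ℝ (exponent d i)

section Coefficients

variable {d : ℕ} {p : MvPolynomial (Fin 2) ℝ}

lemma exponent_injective (d : ℕ) : Function.Injective (exponent d) := by
  intro i j hij
  simpa [exponent, Fin.val_inj] using DFunLike.congr_fun hij 1

lemma exists_exponent_eq {m : Fin 2 →₀ ℕ} (hm : m.degree = d) : ∃ i, exponent d i = m := by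
  rw [Finsupp.degree_eq_sum, Fin.sum_univ_two] at hm
  refine ⟨⟨m 1, by lia⟩, ?_⟩
  ext k
  fin_cases k <;> simp [exponent, ← hm]

lemma monomial_exponent (i : Fin (d + 1)) (c : ℝ) :
    monomial (exponent d i) c = C c * X 0 ^ (d - i : ℕ) * X 1 ^ (i : ℕ) := by
  simp [exponent, X_pow_eq_monomial, C_mul_monomial, monomial_mul]

lemma isHomogeneous_monomial_exponent (i : Fin (d + 1)) (c : ℝ) :
    (monomial (exponent d i) c).IsHomogeneous d := by
  refine isHomogeneous_monomial c ?_
  rw [exponent, map_add, Finsupp.degree_single, Finsupp.degree_single, Nat.sub_add_cancel i.is_le]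

lemma sum_monomial_coeff_exponent (hp : p.IsHomogeneous d) :
    ∑ i, monomial (exponent d i) (coeff (exponent d i) p) = p := by
  ext m
  rw [coeff_sum]
  by_cases hm : m.degree = d
  · obtain ⟨k, rfl⟩ := exists_exponent_eq hm
    simp [coeff_monomial, (exponent_injective d).eq_iff]
  · rw [hp.coeff_eq_zero hm]
    exact Finset.sum_eq_zero fun i _ ↦ (isHomogeneous_monomial_exponent i _).coeff_eq_zero hm

lemma binaryForm_apply (a : Fin (d + 1) → ℝ) :
    binaryForm d a =
      ∑ i : Fin (d + 1), C ((d.choose i : ℝ) * a i) * X 0 ^ (d - i : ℕ) * X 1 ^ (i : ℕ) := by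
  rw [binaryForm, Fintype.linearCombination_apply]
  refine Finset.sum_congr rfl fun i _ ↦ ?_
  rw [smul_monomial, smul_eq_mul, mul_comm, monomial_exponent]

lemma binaryForm_eq_zero_iff {a : Fin (d + 1) → ℝ} : binaryForm d a = 0 ↔ a = 0 := by
  refine ⟨fun h ↦ funext fun k ↦ ?_, by rintro rfl; exact map_zero _⟩
  have hk := congrArg (coeff (exponent d k)) h
  simpa [binaryForm, Fintype.linearCombination_apply, coeff_sum, coeff_monomial,
    (exponent_injective d).eq_iff, (Nat.choose_pos k.is_le).ne'] using hk

lemma lin_pow_eq_binaryForm (v : Fin 2 → ℝ) :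
    lin (v 0) (v 1) ^ d = binaryForm d (veronese d v) := by
  rw [lin, add_comm, add_pow, binaryForm_apply, Finset.sum_range]
  refine Finset.sum_congr rfl fun i _ ↦ ?_
  simp only [veronese, mul_pow, C_mul, C_pow, C_eq_coe_nat]
  ring

lemma apolar_apply (a : Fin (d + 1) → ℝ) (p : MvPolynomial (Fin 2) ℝ) :
    apolar d a p = ∑ i, a i * coeff (exponent d i) p := by
  simp [apolar, Fintype.linearCombination_apply]

lemma apolar_veronese (hp : p.IsHomogeneous d) (v : Fin 2 → ℝ) :
    apolar d (veronese d v) p = eval v p := by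
  conv_rhs => rw [← sum_monomial_coeff_exponent hp]
  simp only [apolar_apply, veronese, monomial_exponent, map_sum, map_mul, map_pow, eval_C, eval_X]
  exact Finset.sum_congr rfl fun i _ ↦ by ring

lemma exists_isHomogeneous_apolar_eq (φ : Module.Dual ℝ (Fin (d + 1) → ℝ)) :
    ∃ p : MvPolynomial (Fin 2) ℝ, p.IsHomogeneous d ∧ ∀ a, apolar d a p = φ a := by
  obtain ⟨b, rfl⟩ := (dotProductEquiv ℝ (Fin (d + 1))).surjective φ
  refine ⟨∑ i, monomial (exponent d i) (b i),
    IsHomogeneous.sum _ _ _ fun i _ ↦ isHomogeneous_monomial_exponent i _, fun a ↦ ?_⟩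
  simp [apolar_apply, coeff_monomial, (exponent_injective d).eq_iff, dotProduct, mul_comm]

end Coefficients

/-- The linear form vanishing at `v`. -/
def vanishingLin (v : Fin 2 → ℝ) : MvPolynomial (Fin 2) ℝ :=
  C (v 0) * X 1 - C (v 1) * X 0

section LinearFactors

variable {d : ℕ} {p : MvPolynomial (Fin 2) ℝ} {v w : Fin 2 → ℝ}

lemma eval_vanishingLin (v w : Fin 2 → ℝ) :
    eval w (vanishingLin v) = v 0 * w 1 - v 1 * w 0 := by
  simp [vanishingLin]

lemma isHomogeneous_vanishingLin (v : Fin 2 → ℝ) : (vanishingLin v).IsHomogeneous 1 :=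
  (isHomogeneous_C_mul_X _ _).sub (isHomogeneous_C_mul_X _ _)

lemma vanishingLin_ne_zero (hv : v ≠ 0) : vanishingLin v ≠ 0 := by
  contrapose! hv
  have h0 := congrArg (eval ![0, 1]) hv
  have h1 := congrArg (eval ![1, 0]) hv
  rw [eval_vanishingLin] at h0 h1
  ext k
  fin_cases k
  · simpa using h0
  · simpa using h1

lemma aeval_smul_of_isHomogeneous {σ R A : Type*} [CommSemiring R] [CommSemiring A] [Algebra R A]
    {n : ℕ} {q : MvPolynomial σ R} (hq : q.IsHomogeneous n) (c : A) (f : σ → A) :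
    aeval (c • f) q = c ^ n * aeval f q := by
  simp only [aeval_def, eval₂_eq, Finset.mul_sum, Pi.smul_apply, smul_eq_mul]
  refine Finset.sum_congr rfl fun m hm ↦ ?_
  rw [hq.degree_eq_sum_deg_support hm, ← Finset.prod_pow_eq_pow_sum, mul_left_comm,
    ← Finset.prod_mul_distrib]
  simp only [mul_pow]

/-- Modulo `vanishingLin v` the vectors `(x, y)` and `v` are proportional. -/
lemma vanishingLin_dvd_pow_mul_sub (hp : p.IsHomogeneous d) (v : Fin 2 → ℝ) (k : Fin 2) :
    vanishingLin v ∣ C (v k) ^ d * p - X k ^ d * C (eval v p) := by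
  have hX : aeval ((C (v k) : MvPolynomial (Fin 2) ℝ) • X) p = C (v k) ^ d * p := by
    rw [aeval_smul_of_isHomogeneous hp, aeval_X_left_apply]
  have hv : aeval ((X k : MvPolynomial (Fin 2) ℝ) • (algebraMap ℝ (MvPolynomial (Fin 2) ℝ) ∘ v)) p =
      X k ^ d * C (eval v p) := by
    rw [aeval_smul_of_isHomogeneous hp, aeval_algebraMap_apply]
    rfl
  rw [← Ideal.mem_span_singleton, ← Ideal.Quotient.mk_eq_mk_iff_sub_mem, ← hX, ← hv,
    ← Ideal.Quotient.mkₐ_eq_mk ℝ, comp_aeval_apply, comp_aeval_apply]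
  congr 2
  ext j
  rw [Ideal.Quotient.mkₐ_eq_mk, Ideal.Quotient.mk_eq_mk_iff_sub_mem, Ideal.mem_span_singleton]
  fin_cases k <;> fin_cases j
  · simp [mul_comm]
  · simp [vanishingLin, mul_comm]
  · rw [dvd_sub_comm]
    simp [vanishingLin, mul_comm]
  · simp [mul_comm]

lemma vanishingLin_dvd (hp : p.IsHomogeneous d) (hv : v ≠ 0) (h : eval v p = 0) :
    vanishingLin v ∣ p := by
  obtain ⟨k, hk⟩ := Function.ne_iff.mp hv
  have hdvd := vanishingLin_dvd_pow_mul_sub hp v k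
  rw [h, C_0, mul_zero, sub_zero, ← C_pow] at hdvd
  exact (IsUnit.dvd_mul_left ((isUnit_iff_ne_zero.mpr (pow_ne_zero d hk)).map C)).mp hdvd

lemma irreducible_vanishingLin (hv : v ≠ 0) : Irreducible (vanishingLin v) := by
  refine irreducible_of_totalDegree_eq_one
    ((isHomogeneous_vanishingLin v).totalDegree (vanishingLin_ne_zero hv)) fun x hx ↦ ?_
  refine isUnit_iff_ne_zero.mpr fun hx0 ↦ vanishingLin_ne_zero hv ?_
  ext m
  simpa [hx0] using hx m

lemma isRelPrime_vanishingLin (hv : v ≠ 0) (hvw : eval v (vanishingLin w) ≠ 0) :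
    IsRelPrime (vanishingLin v) (vanishingLin w) := by
  rw [(irreducible_vanishingLin hv).isRelPrime_iff_not_dvd]
  rintro ⟨q, hq⟩
  rw [hq, map_mul, eval_vanishingLin] at hvw
  exact hvw (by ring)

lemma sq_vanishingLin_dvd (hp : p.IsHomogeneous d) (hd : d ≠ 0) (hv : v ≠ 0)
    (h : ∀ k, eval v (pderiv k p) = 0) : vanishingLin v ^ 2 ∣ p := by
  have hpderiv (k) : vanishingLin v ∣ pderiv k p := vanishingLin_dvd hp.pderiv hv (h k)
  obtain ⟨q, rfl⟩ : vanishingLin v ∣ p := by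
    have heuler : vanishingLin v ∣ d • p := by
      rw [← hp.sum_X_mul_pderiv]
      exact Finset.dvd_sum fun k _ ↦ (hpderiv k).mul_left _
    rw [nsmul_eq_mul, ← C_eq_coe_nat] at heuler
    exact (IsUnit.dvd_mul_left
      ((isUnit_iff_ne_zero.mpr (Nat.cast_ne_zero.mpr hd)).map C)).mp heuler
  have hq (k) : vanishingLin v ∣ pderiv k (vanishingLin v) * q := by
    have := hpderiv k
    rwa [pderiv_mul, dvd_add_left (dvd_mul_right _ _)] at this
  rw [sq]
  refine mul_dvd_mul_left _ ?_
  obtain ⟨k, hk⟩ := Function.ne_iff.mp hv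
  have hunit : IsUnit (C (v k) : MvPolynomial (Fin 2) ℝ) := (isUnit_iff_ne_zero.mpr hk).map C
  rw [← hunit.dvd_mul_left]
  fin_cases k
  · simpa [vanishingLin] using hq 1
  · simpa [vanishingLin] using hq 0

end LinearFactors

section Nodes

variable {ι : Type*} [Fintype ι] {d : ℕ} {p : MvPolynomial (Fin 2) ℝ} {v : ι → Fin 2 → ℝ}

/-- The nodes `v i` represent distinct points of the real projective line. -/
def DistinctNodes (v : ι → Fin 2 → ℝ) : Prop :=
  (∀ i, v i ≠ 0) ∧ Pairwise fun i j ↦ eval (v i) (vanishingLin (v j)) ≠ 0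

/-- The form vanishing exactly at the nodes `v i`. -/
def nodePoly (v : ι → Fin 2 → ℝ) : MvPolynomial (Fin 2) ℝ :=
  ∏ i, vanishingLin (v i)

lemma isHomogeneous_nodePoly (v : ι → Fin 2 → ℝ) :
    (nodePoly v).IsHomogeneous (Fintype.card ι) := by
  simpa [nodePoly] using
    IsHomogeneous.prod Finset.univ _ _ fun i _ ↦ isHomogeneous_vanishingLin (v i)

lemma nodePoly_ne_zero (hv : ∀ i, v i ≠ 0) : nodePoly v ≠ 0 :=
  Finset.prod_ne_zero_iff.mpr fun i _ ↦ vanishingLin_ne_zero (hv i)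

lemma eval_nodePoly_self (v : ι → Fin 2 → ℝ) (i : ι) : eval (v i) (nodePoly v) = 0 := by
  rw [nodePoly, map_prod]
  exact Finset.prod_eq_zero (Finset.mem_univ i) (by rw [eval_vanishingLin]; ring)

lemma DistinctNodes.nodePoly_dvd (hv : DistinctNodes v) (hp : p.IsHomogeneous d)
    (h : ∀ i, eval (v i) p = 0) : nodePoly v ∣ p :=
  Fintype.prod_dvd_of_isRelPrime (fun i _ hij ↦ isRelPrime_vanishingLin (hv.1 i) (hv.2 hij))
    fun i ↦ vanishingLin_dvd hp (hv.1 i) (h i)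

lemma DistinctNodes.sq_nodePoly_dvd (hv : DistinctNodes v) (hp : p.IsHomogeneous d) (hd : d ≠ 0)
    (h : ∀ i k, eval (v i) (pderiv k p) = 0) : nodePoly v ^ 2 ∣ p := by
  rw [nodePoly, ← Finset.prod_pow]
  exact Fintype.prod_dvd_of_isRelPrime
    (fun i _ hij ↦ (isRelPrime_vanishingLin (hv.1 i) (hv.2 hij)).pow)
    fun i ↦ sq_vanishingLin_dvd hp hd (hv.1 i) (h i)

lemma DistinctNodes.eq_zero_of_pderiv_eq_zero (hv : DistinctNodes v) (hp : p.IsHomogeneous d)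
    (hd : d ≠ 0) (hcard : d < 2 * Fintype.card ι) (h : ∀ i k, eval (v i) (pderiv k p) = 0) :
    p = 0 := by
  by_contra hp0
  have hdeg := totalDegree_le_of_dvd_of_isDomain (hv.sq_nodePoly_dvd hp hd h) hp0
  rw [((isHomogeneous_nodePoly v).pow 2).totalDegree (pow_ne_zero 2 (nodePoly_ne_zero hv.1)),
    hp.totalDegree hp0] at hdeg
  lia

lemma DistinctNodes.eq_mul_nodePoly (hv : DistinctNodes v)
    (hp : p.IsHomogeneous (Fintype.card ι)) (h : ∀ i, eval (v i) p = 0) :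
    ∃ c, p = C c * nodePoly v := by
  obtain ⟨q, rfl⟩ := hv.nodePoly_dvd hp h
  rcases eq_or_ne q 0 with rfl | hq
  · exact ⟨0, by simp⟩
  have hdeg := hp.totalDegree (mul_ne_zero (nodePoly_ne_zero hv.1) hq)
  rw [totalDegree_mul_of_isDomain (nodePoly_ne_zero hv.1) hq,
    (isHomogeneous_nodePoly v).totalDegree (nodePoly_ne_zero hv.1), Nat.add_eq_left] at hdeg
  exact ⟨coeff 0 q, by rw [mul_comm, ← totalDegree_eq_zero_iff_eq_C.mp hdeg]⟩

end Nodes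

/-- The form with weighted coefficient vector `a` is a combination of `r` powers of nonzero real
linear forms. -/
def IsSumOfPowers (d r : ℕ) (a : Fin (d + 1) → ℝ) : Prop :=
  ∃ v : Fin r → Fin 2 → ℝ, (∀ i, v i ≠ 0) ∧
    a ∈ Submodule.span ℝ (Set.range fun i ↦ veronese d (v i))

section SumsOfPowers

variable {d r : ℕ} {a : Fin (d + 1) → ℝ}

lemma veronese_smul (d : ℕ) (c : ℝ) (v : Fin 2 → ℝ) :
    veronese d (c • v) = c ^ d • veronese d v := by
  ext i
  rw [Pi.smul_apply, smul_eq_mul, ← pow_sub_mul_pow c i.is_le]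
  simp only [veronese, Pi.smul_apply, smul_eq_mul]
  ring

lemma hasDecomp_binaryForm_iff : HasDecomp (binaryForm d a) d r ↔ IsSumOfPowers d r a := by
  have hsum (c x y : Fin r → ℝ) : ∑ j, C (c j) * lin (x j) (y j) ^ d =
      binaryForm d (∑ j, c j • veronese d ![x j, y j]) := by
    simp only [map_sum, map_smul, ← lin_pow_eq_binaryForm, smul_eq_C_mul]
    rfl
  simp only [HasDecomp, IsSumOfPowers, Submodule.mem_span_range_iff_exists_fun]
  constructor
  · rintro ⟨c, x, y, hxy, h⟩
    refine ⟨fun j ↦ ![x j, y j], fun j hj ↦ hxy j ?_, c, ?_⟩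
    · simpa using hj
    · rw [hsum, ← sub_eq_zero, ← map_sub, binaryForm_eq_zero_iff, sub_eq_zero] at h
      exact h.symm
  · rintro ⟨v, hv, c, rfl⟩
    refine ⟨c, fun j ↦ v j 0, fun j ↦ v j 1, fun j hj ↦ hv j ?_, ?_⟩
    · ext k
      fin_cases k <;> simp_all
    · rw [hsum]
      congr! with j
      ext k
      fin_cases k <;> rfl

lemma IsSumOfPowers.add_smul_veronese (h : IsSumOfPowers d r a) (c : ℝ) {w : Fin 2 → ℝ}
    (hw : w ≠ 0) : IsSumOfPowers d (r + 1) (a + c • veronese d w) := by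
  obtain ⟨v, hv, ha⟩ := h
  obtain ⟨b, rfl⟩ := (Submodule.mem_span_range_iff_exists_fun ℝ).mp ha
  exact ⟨Fin.cons w v, Fin.cases hw hv, (Submodule.mem_span_range_iff_exists_fun ℝ).mpr
    ⟨Fin.cons c b, by simp [Fin.sum_univ_succ, add_comm]⟩⟩

lemma IsSumOfPowers.mono {s : ℕ} (h : IsSumOfPowers d r a) (hrs : r ≤ s) :
    IsSumOfPowers d s a := by
  induction s, hrs using Nat.le_induction with
  | base => exact h
  | succ s _ ih => simpa using ih.add_smul_veronese 0 one_ne_zero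

lemma mem_span_veronese_of_forall_apolar_eq_zero {ι : Type*} {v : ι → Fin 2 → ℝ}
    (h : ∀ p : MvPolynomial (Fin 2) ℝ, p.IsHomogeneous d → (∀ i, eval (v i) p = 0) →
      apolar d a p = 0) :
    a ∈ Submodule.span ℝ (Set.range fun i ↦ veronese d (v i)) := by
  by_contra ha
  obtain ⟨φ, hφa, hφ⟩ := Submodule.exists_le_ker_of_notMem ha
  obtain ⟨p, hp, hpφ⟩ := exists_isHomogeneous_apolar_eq φ
  refine hφa (hpφ a ▸ h p hp fun i ↦ ?_)
  rw [← apolar_veronese hp, hpφ]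
  exact hφ (Submodule.subset_span ⟨i, rfl⟩)

lemma apolar_eq_zero_of_mem_span_veronese {ι : Type*} {v : ι → Fin 2 → ℝ}
    {p : MvPolynomial (Fin 2) ℝ} (hp : p.IsHomogeneous d) (hpv : ∀ i, eval (v i) p = 0)
    (ha : a ∈ Submodule.span ℝ (Set.range fun i ↦ veronese d (v i))) : apolar d a p = 0 := by
  suffices Submodule.span ℝ (Set.range fun i ↦ veronese d (v i)) ≤ ((apolar d).flip p).ker from
    this ha
  rw [Submodule.span_le]
  rintro _ ⟨i, rfl⟩
  exact (apolar_veronese hp (v i)).trans (hpv i)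

end SumsOfPowers

section Continuity

variable {T σ ι : Type*} [TopologicalSpace T]

lemma continuous_coeff_mul {f g : T → MvPolynomial σ ℝ} (hf : ∀ m, Continuous fun t ↦ coeff m (f t))
    (hg : ∀ m, Continuous fun t ↦ coeff m (g t)) (m : σ →₀ ℕ) :
    Continuous fun t ↦ coeff m (f t * g t) := by
  classical
  simp only [coeff_mul]
  exact continuous_finsetSum _ fun x _ ↦ (hf x.1).mul (hg x.2)

lemma continuous_coeff_prod (s : Finset ι) {f : ι → T → MvPolynomial σ ℝ}
    (hf : ∀ i m, Continuous fun t ↦ coeff m (f i t)) (m : σ →₀ ℕ) :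
    Continuous fun t ↦ coeff m (∏ i ∈ s, f i t) := by
  classical
  induction s using Finset.induction_on generalizing m with
  | empty => simpa only [Finset.prod_empty] using continuous_const
  | insert i s his ih =>
    simp only [Finset.prod_insert his]
    exact continuous_coeff_mul (hf i) ih m

lemma continuous_apolar_nodePoly_mul [Fintype ι] (d : ℕ) (q : MvPolynomial (Fin 2) ℝ) :
    Continuous fun x : (Fin (d + 1) → ℝ) × (ι → Fin 2 → ℝ) ↦
      apolar d x.1 (nodePoly x.2 * q) := by
  have hlin (i : ι) (m : Fin 2 →₀ ℕ) :
      Continuous fun x : (Fin (d + 1) → ℝ) × (ι → Fin 2 → ℝ) ↦ coeff m (vanishingLin (x.2 i)) := by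
    simp only [vanishingLin, coeff_sub, coeff_C_mul]
    fun_prop
  simp only [apolar_apply]
  exact continuous_finsetSum _ fun i _ ↦ (by fun_prop : Continuous _).mul
    (continuous_coeff_mul (continuous_coeff_prod _ hlin) (fun _ ↦ continuous_const) _)

end Continuity

section MaximalRank

open Real

variable {d : ℕ}

/-- The unit vectors at the angles `θ + k * π / d`; their lines are equally spaced. -/
def rotatedNodes (d : ℕ) (θ : ℝ) (k : Fin d) : Fin 2 → ℝ :=
  ![cos (θ + k * (π / d)), sin (θ + k * (π / d))]

lemma distinctNodes_rotatedNodes (d : ℕ) (θ : ℝ) : DistinctNodes (rotatedNodes d θ) := by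
  constructor
  · intro k hk
    have h0 : cos (θ + k * (π / d)) = 0 := congrFun hk 0
    have h1 : sin (θ + k * (π / d)) = 0 := congrFun hk 1
    simpa [h0, h1] using sin_sq_add_cos_sq (θ + k * (π / d))
  · intro i j hij
    have hsin : eval (rotatedNodes d θ i) (vanishingLin (rotatedNodes d θ j)) =
        sin (((i : ℝ) - j) * (π / d)) := by
      rw [show ((i : ℝ) - j) * (π / d) = (θ + i * (π / d)) - (θ + j * (π / d)) by ring, sin_sub,
        eval_vanishingLin]
      simp only [rotatedNodes, Matrix.cons_val_zero, Matrix.cons_val_one]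
      ring
    rw [hsin, Ne, sin_eq_zero_iff]
    rintro ⟨n, hn⟩
    have hd : (d : ℝ) ≠ 0 := Nat.cast_ne_zero.mpr (Fin.pos i).ne'
    have hdvd : (d : ℤ) ∣ (i : ℕ) - (j : ℕ) := by
      refine ⟨n, ?_⟩
      field_simp at hn
      rw [mul_comm]
      exact_mod_cast hn.symm
    have heq := Int.eq_zero_of_abs_lt_dvd hdvd (by rw [abs_lt]; omega)
    exact hij (Fin.ext (by omega))

lemma nodePoly_rotatedNodes_add (hd : d ≠ 0) (θ : ℝ) :
    nodePoly (rotatedNodes d (θ + π / d)) = -nodePoly (rotatedNodes d θ) := by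
  let ℓ (k : ℕ) := vanishingLin ![cos (θ + k * (π / d)), sin (θ + k * (π / d))]
  have hnext : nodePoly (rotatedNodes d (θ + π / d)) = ∏ k ∈ Finset.range d, ℓ (k + 1) := by
    rw [Finset.prod_range]
    refine Finset.prod_congr rfl fun k _ ↦ ?_
    simp only [rotatedNodes, ℓ, Nat.cast_add, Nat.cast_one, add_mul, one_mul, add_assoc,
      add_comm (π / d)]
  have hcur : nodePoly (rotatedNodes d θ) = ∏ k ∈ Finset.range d, ℓ k :=
    (Finset.prod_range ℓ).symm
  have hlast : ℓ d = -ℓ 0 := by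
    simp [ℓ, vanishingLin, mul_div_cancel₀, hd, neg_add_eq_sub]
  have h0 : ℓ 0 ≠ 0 := vanishingLin_ne_zero ((distinctNodes_rotatedNodes d θ).1 ⟨0, by lia⟩)
  apply mul_right_cancel₀ h0
  rw [hnext, hcur, ← Finset.prod_range_succ', Finset.prod_range_succ, hlast, mul_neg, neg_mul]

lemma exists_apolar_rotatedNodes_eq_zero (hd : d ≠ 0) (a : Fin (d + 1) → ℝ) :
    ∃ θ, apolar d a (nodePoly (rotatedNodes d θ)) = 0 := by
  set h : ℝ → ℝ := fun θ ↦ apolar d a (nodePoly (rotatedNodes d θ))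
  have hcont : Continuous h := by
    have hnodes : Continuous (rotatedNodes d) := by
      unfold rotatedNodes
      fun_prop
    simpa [Function.comp_def] using
      (continuous_apolar_nodePoly_mul d 1).comp (continuous_const (y := a).prodMk hnodes)
  have hneg : h (π / d) = -h 0 := by
    simpa [h] using congrArg (apolar d a) (nodePoly_rotatedNodes_add hd 0)
  rcases le_total (h 0) 0 with h0 | h0
  · exact mem_range_of_exists_le_of_exists_ge hcont ⟨0, h0⟩
      ⟨π / d, (neg_nonneg.mpr h0).trans_eq hneg.symm⟩
  · exact mem_range_of_exists_le_of_exists_ge hcont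
      ⟨π / d, hneg.trans_le (neg_nonpos.mpr h0)⟩ ⟨0, h0⟩

theorem isSumOfPowers_degree (hd : d ≠ 0) (a : Fin (d + 1) → ℝ) : IsSumOfPowers d d a := by
  obtain ⟨θ, hθ⟩ := exists_apolar_rotatedNodes_eq_zero hd a
  have hnodes := distinctNodes_rotatedNodes d θ
  refine ⟨rotatedNodes d θ, hnodes.1, mem_span_veronese_of_forall_apolar_eq_zero fun p hp hpv ↦ ?_⟩
  obtain ⟨c, rfl⟩ := hnodes.eq_mul_nodePoly (by rwa [Fintype.card_fin]) hpv
  rw [← smul_eq_C_mul, map_smul, hθ, smul_zero]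

end MaximalRank

section Rank

variable {d r : ℕ} {a : Fin (d + 1) → ℝ}

lemma realRank_binaryForm_le_iff (hd : d ≠ 0) :
    realRank (binaryForm d a) d ≤ r ↔ IsSumOfPowers d r a := by
  simp only [realRank, hasDecomp_binaryForm_iff]
  refine ⟨fun h ↦ ?_, fun h ↦ Nat.sInf_le h⟩
  have hmin : IsSumOfPowers d (sInf {r | IsSumOfPowers d r a}) a :=
    Nat.sInf_mem (s := {r | IsSumOfPowers d r a}) ⟨d, isSumOfPowers_degree hd a⟩
  exact hmin.mono h

/-- The weighted coefficient vectors of the nonzero forms of degree `d` and real rank `r`. -/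
def rankLocus (d r : ℕ) : Set (Fin (d + 1) → ℝ) :=
  {a | binaryForm d a ≠ 0 ∧ realRank (binaryForm d a) d = r}

lemma mem_rankLocus_succ_iff (hd : d ≠ 0) :
    a ∈ rankLocus d (r + 1) ↔ IsSumOfPowers d (r + 1) a ∧ ¬IsSumOfPowers d r a := by
  have hne (h : ¬IsSumOfPowers d r a) : binaryForm d a ≠ 0 := by
    rw [Ne, binaryForm_eq_zero_iff]
    rintro rfl
    exact h ⟨1, fun _ ↦ one_ne_zero, Submodule.zero_mem _⟩
  rw [rankLocus, Set.mem_ofPred_eq, ← realRank_binaryForm_le_iff hd]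
  rw [← realRank_binaryForm_le_iff hd] at hne ⊢
  constructor
  · rintro ⟨-, h⟩
    lia
  · rintro ⟨hle, hlt⟩
    exact ⟨hne hlt, by lia⟩

end Rank

section HarmonicForm

open Complex Filter Topology

variable {d : ℕ}

lemma IsSumOfPowers.exists_norm_eq_one {r : ℕ} {a : Fin (d + 1) → ℝ} (h : IsSumOfPowers d r a) :
    ∃ v : Fin r → Fin 2 → ℝ, (∀ i, ‖v i‖ = 1) ∧
      a ∈ Submodule.span ℝ (Set.range fun i ↦ veronese d (v i)) := by
  obtain ⟨v, hv, ha⟩ := h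
  refine ⟨fun i ↦ ‖v i‖⁻¹ • v i, fun i ↦ norm_smul_inv_norm (hv i), Submodule.span_le.mpr ?_ ha⟩
  rintro _ ⟨i, rfl⟩
  have hi : veronese d (v i) = ‖v i‖ ^ d • veronese d (‖v i‖⁻¹ • v i) := by
    rw [veronese_smul, smul_smul, ← mul_pow, mul_inv_cancel₀ (norm_ne_zero_iff.mpr (hv i)),
      one_pow, one_smul]
  exact Set.mem_of_eq_of_mem hi (Submodule.smul_mem _ _ (Submodule.subset_span ⟨i, rfl⟩))

/-- The weighted coefficient vector of the harmonic form `Re ((x + I * y) ^ d)`. -/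
def harmonicVec (d : ℕ) : Fin (d + 1) → ℝ :=
  fun i ↦ (I ^ (i : ℕ)).re

lemma apolar_harmonicVec {p : MvPolynomial (Fin 2) ℝ} (hp : p.IsHomogeneous d) :
    apolar d (harmonicVec d) p = (aeval ![1, I] p).re := by
  conv_rhs => rw [← sum_monomial_coeff_exponent hp]
  simp only [apolar_apply, harmonicVec, monomial_exponent, map_sum, map_mul, map_pow, aeval_X,
    algHom_C, coe_algebraMap, Matrix.cons_val_zero, Matrix.cons_val_one, one_pow, mul_one,
    re_sum, re_ofReal_mul]
  exact Finset.sum_congr rfl fun i _ ↦ mul_comm _ _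

lemma aeval_one_I_nodePoly_ne_zero {ι : Type*} [Fintype ι] {v : ι → Fin 2 → ℝ}
    (hv : ∀ i, v i ≠ 0) : aeval ![1, I] (nodePoly v) ≠ 0 := by
  rw [nodePoly, map_prod, Finset.prod_ne_zero_iff]
  intro i _ h
  refine hv i (funext fun k ↦ ?_)
  have hre := congrArg re h
  have him := congrArg im h
  fin_cases k
  · simpa [vanishingLin] using him
  · simpa [vanishingLin] using hre

lemma exists_apolar_harmonicVec_ne_zero {v : Fin d → Fin 2 → ℝ} (hv : ∀ i, v i ≠ 0) :
    ∃ k, apolar (d + 1) (harmonicVec (d + 1)) (nodePoly v * X k) ≠ 0 := by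
  by_contra! h
  have hhom (k) : (nodePoly v * X k).IsHomogeneous (d + 1) := by
    simpa using (isHomogeneous_nodePoly v).mul (isHomogeneous_X ℝ k)
  refine aeval_one_I_nodePoly_ne_zero hv (Complex.ext ?_ ?_)
  · simpa [apolar_harmonicVec (hhom 0)] using h 0
  · simpa [apolar_harmonicVec (hhom 1)] using h 1

lemma eventually_not_isSumOfPowers (d : ℕ) :
    ∀ᶠ a in 𝓝 (harmonicVec (d + 1)), ¬IsSumOfPowers (d + 1) d a := by
  have hK : IsCompact (Set.univ.pi fun _ : Fin d ↦ Metric.sphere (0 : Fin 2 → ℝ) 1) :=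
    isCompact_univ_pi fun _ ↦ isCompact_sphere _ _
  have hev := hK.eventually_forall_of_forall_eventually
    (P := fun a v ↦ ∃ k, apolar (d + 1) a (nodePoly v * X k) ≠ 0) (x₀ := harmonicVec (d + 1))
    fun v hv ↦ ?_
  · filter_upwards [hev] with a ha hsum
    obtain ⟨v, hv, hav⟩ := hsum.exists_norm_eq_one
    obtain ⟨k, hk⟩ := ha v (by simpa using hv)
    have hhom : (nodePoly v * X k).IsHomogeneous (d + 1) := by
      simpa using (isHomogeneous_nodePoly v).mul (isHomogeneous_X ℝ k)
    refine hk (apolar_eq_zero_of_mem_span_veronese hhom (fun i ↦ ?_) hav)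
    rw [map_mul, eval_nodePoly_self, zero_mul]
  · obtain ⟨k, hk⟩ := exists_apolar_harmonicVec_ne_zero (v := v) fun i hi ↦ by
      simpa [hi] using hv i trivial
    filter_upwards [(continuous_apolar_nodePoly_mul (d + 1) (X k)).continuousAt.eventually_ne hk]
      with x hx using ⟨k, hx⟩

theorem interior_rankLocus_self_nonempty (hd : d ≠ 0) :
    (interior (rankLocus d d)).Nonempty := by
  obtain ⟨n, rfl⟩ := Nat.exists_eq_succ_of_ne_zero hd
  refine ⟨harmonicVec (n + 1), mem_interior_iff_mem_nhds.mpr ?_⟩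
  filter_upwards [eventually_not_isSumOfPowers n] with a ha
  exact (mem_rankLocus_succ_iff hd).mpr ⟨isSumOfPowers_degree hd a, ha⟩

end HarmonicForm

section Openness

open Filter Topology

lemma hasFDerivAt_eval {σ : Type*} [Fintype σ] (p : MvPolynomial σ ℝ) (w : σ → ℝ) :
    HasFDerivAt (fun u ↦ eval u p)
      (∑ k, eval w (pderiv k p) • ContinuousLinearMap.proj (R := ℝ) (φ := fun _ ↦ ℝ) k) w := by
  classical
  induction p using MvPolynomial.induction_on with
  | C c => simpa using hasFDerivAt_const c w
  | add p q hp hq => simpa [add_smul, Finset.sum_add_distrib] using hp.fun_add hq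
  | mul_X p i hp =>
    simpa [pderiv_X, Pi.single_apply, add_smul, Finset.sum_add_distrib, Finset.smul_sum, smul_smul,
      mul_comm, apply_ite] using hp.fun_mul (hasFDerivAt_apply i w)

variable {ι : Type*} [Fintype ι] {d : ℕ} {v : ι → Fin 2 → ℝ} {c : ι → ℝ}

/-- The combination with weights `c` of the Veronese images of the nodes `v`. -/
def secantMap (d : ℕ) (c : ι → ℝ) (v : ι → Fin 2 → ℝ) : Fin (d + 1) → ℝ :=
  ∑ j, c j • veronese d (v j)

lemma contDiff_secantMap (d : ℕ) (c : ι → ℝ) : ContDiff ℝ 1 (secantMap d c) := by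
  unfold secantMap veronese
  fun_prop

lemma apolar_secantMap {p : MvPolynomial (Fin 2) ℝ} (hp : p.IsHomogeneous d) (c : ι → ℝ)
    (v : ι → Fin 2 → ℝ) : apolar d (secantMap d c v) p = ∑ j, c j * eval (v j) p := by
  simp [secantMap, apolar_veronese hp]

lemma apolar_fderiv_secantMap [DecidableEq ι] {p : MvPolynomial (Fin 2) ℝ} (hp : p.IsHomogeneous d)
    (c : ι → ℝ) (v : ι → Fin 2 → ℝ) (j : ι) (k : Fin 2) :
    apolar d (fderiv ℝ (secantMap d c) v (Pi.single j (Pi.single k 1))) p =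
      c j * eval (v j) (pderiv k p) := by
  have hpair : HasFDerivAt (fun u ↦ ∑ i, c i * eval (u i) p)
      (((apolar d).flip p).toContinuousLinearMap ∘L fderiv ℝ (secantMap d c) v) v := by
    simp only [← apolar_secantMap hp]
    exact ((apolar d).flip p).toContinuousLinearMap.hasFDerivAt.comp v
      ((contDiff_secantMap d c).differentiable one_ne_zero v).hasFDerivAt
  have hsum := HasFDerivAt.fun_sum (u := Finset.univ) fun i (_ : i ∈ Finset.univ) ↦
    ((hasFDerivAt_eval p (v i)).comp v (hasFDerivAt_apply (𝕜 := ℝ) i v)).const_mul (c i)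
  have h := DFunLike.congr_fun (hpair.unique hsum) (Pi.single j (Pi.single k 1))
  fin_cases k <;> simpa [Pi.single_apply, ite_apply] using h

lemma DistinctNodes.range_fderiv_secantMap (hv : DistinctNodes v) (hc : ∀ j, c j ≠ 0) (hd : d ≠ 0)
    (hcard : d < 2 * Fintype.card ι) : (fderiv ℝ (secantMap d c) v).range = ⊤ := by
  classical
  by_contra hrange
  obtain ⟨φ, hφ0, hφ⟩ := Submodule.exists_le_ker_of_lt_top _ (lt_top_iff_ne_top.mpr hrange)
  obtain ⟨p, hp, hpφ⟩ := exists_isHomogeneous_apolar_eq φ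
  have hp0 : p = 0 := hv.eq_zero_of_pderiv_eq_zero hp hd hcard fun j k ↦ by
    have hjk := hφ ⟨Pi.single j (Pi.single k 1), rfl⟩
    rw [LinearMap.mem_ker, ← hpφ] at hjk
    exact (mul_eq_zero.mp ((apolar_fderiv_secantMap hp c v j k).symm.trans hjk)).resolve_left (hc j)
  exact hφ0 (LinearMap.ext fun a ↦ by rw [← hpφ, hp0, map_zero, LinearMap.zero_apply])

theorem DistinctNodes.eventually_isSumOfPowers {r : ℕ} {v : Fin r → Fin 2 → ℝ} {c : Fin r → ℝ}
    (hv : DistinctNodes v) (hc : ∀ j, c j ≠ 0) (hd : d ≠ 0) (hr : d < 2 * r) :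
    ∀ᶠ a in 𝓝 (secantMap d c v), IsSumOfPowers d r a := by
  have hstrict := (contDiff_secantMap d c).contDiffAt.hasStrictFDerivAt one_ne_zero (x := v)
  rw [← hstrict.map_nhds_eq_of_surj (hv.range_fderiv_secantMap hc hd (by simpa using hr)),
    eventually_map]
  have hne : ∀ᶠ u in 𝓝 v, ∀ j, u j ≠ 0 :=
    eventually_all.mpr fun j ↦ (continuous_apply j).continuousAt.eventually_ne (hv.1 j)
  filter_upwards [hne] with u hu
  exact ⟨u, hu, Submodule.sum_mem _ fun j _ ↦
    Submodule.smul_mem _ _ (Submodule.subset_span ⟨j, rfl⟩)⟩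

end Openness

section Descent

open Filter Topology

variable {d r : ℕ}

lemma exists_eq_smul_of_eval_vanishingLin_eq_zero {v w : Fin 2 → ℝ} (hw : w ≠ 0)
    (h : eval w (vanishingLin v) = 0) : ∃ t : ℝ, v = t • w := by
  obtain ⟨k, hk⟩ := Function.ne_iff.mp hw
  rw [eval_vanishingLin] at h
  refine ⟨v k / w k, funext fun j ↦ ?_⟩
  rw [Pi.smul_apply, smul_eq_mul, div_mul_eq_mul_div, eq_div_iff hk]
  fin_cases k <;> fin_cases j <;> simp <;> linarith

lemma DistinctNodes.comp {ι κ : Type*} {v : ι → Fin 2 → ℝ} (hv : DistinctNodes v) {e : κ → ι}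
    (he : Function.Injective e) : DistinctNodes (v ∘ e) :=
  ⟨fun i ↦ hv.1 (e i), fun _ _ hij ↦ hv.2 (he.ne hij)⟩

/-- In a decomposition of minimal length no term lies in the span of the other ones. -/
lemma exists_eq_secantMap_of_not_isSumOfPowers {a : Fin (d + 1) → ℝ}
    (h : IsSumOfPowers d (r + 1) a) (hmin : ¬IsSumOfPowers d r a) :
    ∃ (c : Fin (r + 1) → ℝ) (v : Fin (r + 1) → Fin 2 → ℝ),
      DistinctNodes v ∧ (∀ j, c j ≠ 0) ∧ a = secantMap d c v := by
  obtain ⟨v, hv, ha⟩ := h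
  obtain ⟨c, rfl⟩ := (Submodule.mem_span_range_iff_exists_fun ℝ).mp ha
  have hdrop (j) : c j • veronese d (v j) ∉
      Submodule.span ℝ (Set.range fun i ↦ veronese d (v (j.succAbove i))) := fun hj ↦ by
    refine hmin ⟨v ∘ j.succAbove, fun i ↦ hv _, ?_⟩
    rw [Fin.sum_univ_succAbove _ j]
    exact Submodule.add_mem _ hj (Submodule.sum_mem _ fun i _ ↦
      Submodule.smul_mem _ _ (Submodule.subset_span ⟨i, rfl⟩))
  refine ⟨c, v, ⟨hv, fun i j hij h0 ↦ hdrop j ?_⟩, fun j hj ↦ hdrop j ?_, rfl⟩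
  · obtain ⟨t, ht⟩ := exists_eq_smul_of_eval_vanishingLin_eq_zero (hv i) h0
    obtain ⟨k, rfl⟩ := Fin.exists_succAbove_eq hij
    rw [ht, veronese_smul]
    exact Submodule.smul_mem _ _ (Submodule.smul_mem _ _ (Submodule.subset_span ⟨k, rfl⟩))
  · rw [hj, zero_smul]
    exact Submodule.zero_mem _

theorem interior_rankLocus_nonempty_of_succ (hd : d ≠ 0) (hr : d < 2 * r)
    (h : (interior (rankLocus d (r + 1))).Nonempty) : (interior (rankLocus d r)).Nonempty := by
  obtain ⟨s, rfl⟩ : ∃ s, r = s + 1 := Nat.exists_eq_succ_of_ne_zero (by lia)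
  obtain ⟨a, ha⟩ := h
  obtain ⟨hsum, hmin⟩ := (mem_rankLocus_succ_iff hd).mp (interior_subset ha)
  obtain ⟨c, v, hv, hc, rfl⟩ := exists_eq_secantMap_of_not_isSumOfPowers hsum hmin
  set b := secantMap d (c ∘ Fin.castSucc) (v ∘ Fin.castSucc)
  set t := c (Fin.last (s + 1)) • veronese d (v (Fin.last (s + 1)))
  have hsplit : secantMap d c v = b + t := Fin.sum_univ_castSucc _
  have hle : ∀ᶠ x in 𝓝 b, IsSumOfPowers d (s + 1) x :=
    (hv.comp (Fin.castSucc_injective _)).eventually_isSumOfPowers (fun j ↦ hc _) hd hr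
  have hge : ∀ᶠ x in 𝓝 b, x + t ∈ rankLocus d (s + 2) := by
    have hmem : rankLocus d (s + 2) ∈ 𝓝 (b + t) := hsplit ▸ mem_interior_iff_mem_nhds.mp ha
    exact (continuous_add_const t).continuousAt.eventually_mem hmem
  refine ⟨b, mem_interior_iff_mem_nhds.mpr ?_⟩
  filter_upwards [hle, hge] with x hx hxt
  refine (mem_rankLocus_succ_iff hd).mpr ⟨hx, fun hlt ↦ ?_⟩
  exact ((mem_rankLocus_succ_iff hd).mp hxt).2 (hlt.add_smul_veronese _ (hv.1 _))

end Descent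

section LowerBound

variable {d r : ℕ}

/-- The `(r + 1) × (r + 1)` catalecticant of the form with weighted coefficient vector `a`, used to
bound its rank from below. The rows are reversed so that the coefficient with index `r` fills the
diagonal. -/
def catalecticant (hr : 2 * r ≤ d) (a : Fin (d + 1) → ℝ) : Matrix (Fin (r + 1)) (Fin (r + 1)) ℝ :=
  Matrix.of fun i j ↦ a ⟨i + (r - j), by lia⟩

lemma catalecticant_add_smul_single (hr : 2 * r ≤ d) (a : Fin (d + 1) → ℝ) (t : ℝ) :
    catalecticant hr (a + t • Pi.single ⟨r, by lia⟩ 1) =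
      catalecticant hr a + Matrix.scalar _ t := by
  ext i j
  have hij : (i : ℕ) + (r - j) = r ↔ i = j := by lia
  simp [catalecticant, Pi.single_apply, Matrix.diagonal_apply, hij]

lemma catalecticant_sum_smul_veronese (hr : 2 * r ≤ d) {ι : Type*} [Fintype ι] (c : ι → ℝ)
    (v : ι → Fin 2 → ℝ) :
    catalecticant hr (∑ k, c k • veronese d (v k)) =
      Matrix.of (fun (i : Fin (r + 1)) k ↦
          c k * (v k 0 ^ (r - i : ℕ) * v k 1 ^ (i : ℕ))) *
        Matrix.of (fun k (j : Fin (r + 1)) ↦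
          v k 0 ^ (d - 2 * r + j : ℕ) * v k 1 ^ (r - j : ℕ)) := by
  ext i j
  have hexp : d - (i + (r - j)) = (r - i) + (d - 2 * r + j) := by lia
  simp only [catalecticant, Matrix.of_apply, Matrix.mul_apply, Finset.sum_apply, Pi.smul_apply,
    smul_eq_mul, veronese, hexp, pow_add]
  exact Finset.sum_congr rfl fun k _ ↦ by ring

lemma det_mul_eq_zero_of_card_lt {m n K : Type*} [Fintype m] [DecidableEq m] [Fintype n]
    [Field K] (h : Fintype.card n < Fintype.card m) (A : Matrix m n K) (B : Matrix n m K) :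
    (A * B).det = 0 := by
  by_contra hdet
  have hrank := Matrix.rank_of_isUnit (A * B) ((Matrix.isUnit_iff_isUnit_det _).mpr (.mk0 _ hdet))
  exact absurd ((Matrix.rank_mul_le_left A B).trans (Matrix.rank_le_card_width A)) (by lia)

lemma IsSumOfPowers.det_catalecticant_eq_zero {a : Fin (d + 1) → ℝ} (h : IsSumOfPowers d r a)
    (hr : 2 * r ≤ d) : (catalecticant hr a).det = 0 := by
  obtain ⟨v, -, ha⟩ := h
  obtain ⟨c, rfl⟩ := (Submodule.mem_span_range_iff_exists_fun ℝ).mp ha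
  rw [catalecticant_sum_smul_veronese]
  exact det_mul_eq_zero_of_card_lt (by simp) _ _

theorem interior_isSumOfPowers_eq_empty (hr : 2 * r ≤ d) :
    interior {a | IsSumOfPowers d r a} = ∅ := by
  refine Set.eq_empty_of_forall_notMem fun a ha ↦ ?_
  have hline : Continuous fun t : ℝ ↦ a + t • (Pi.single ⟨r, by lia⟩ 1 : Fin (d + 1) → ℝ) := by
    fun_prop
  have hnhds := hline.continuousAt.preimage_mem_nhds (x := 0)
    (by simpa using mem_interior_iff_mem_nhds.mp ha)
  have hfin := (-catalecticant hr a).charpoly.finite_setOfPred_isRoot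
    (Matrix.charpoly_monic _).ne_zero
  refine infinite_of_mem_nhds 0 hnhds (hfin.subset fun t ht ↦ ?_)
  rw [Set.mem_ofPred_eq, Polynomial.IsRoot, Matrix.eval_charpoly, sub_neg_eq_add,
    add_comm (Matrix.scalar _ t), ← catalecticant_add_smul_single]
  exact IsSumOfPowers.det_catalecticant_eq_zero ht hr

end LowerBound

section TypicalRanks

variable {d r : ℕ}

lemma rankLocus_subset_setOf_isSumOfPowers (hd : d ≠ 0) :
    rankLocus d r ⊆ {a | IsSumOfPowers d r a} :=
  fun _ ha ↦ (realRank_binaryForm_le_iff hd).mp ha.2.le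

lemma interior_rankLocus_nonempty_of_le (hd : d ≠ 0) (hr : d < 2 * r) (hrd : r ≤ d) :
    (interior (rankLocus d r)).Nonempty := by
  induction hrd using Nat.decreasingInduction with
  | of_succ r _ ih => exact interior_rankLocus_nonempty_of_succ hd hr (ih (by lia))
  | self => exact interior_rankLocus_self_nonempty hd

-- The inequation in `stmt16` fixes no type for its variables, so it elaborates in
-- `MvPolynomial ℕ ℝ`, while `realRank` forces the second sum into `MvPolynomial (Fin 2) ℝ`.
lemma sum_C_choose_mul_X_pow_ne_zero_iff (a : Fin (d + 1) → ℝ) :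
    (∑ i : Fin (d + 1), C ((d.choose i : ℝ) * a i) * X 0 ^ (d - i : ℕ) * X 1 ^ (i : ℕ) :
      MvPolynomial ℕ ℝ) ≠ 0 ↔ binaryForm d a ≠ 0 := by
  rw [← (rename_injective Fin.val Fin.val_injective).ne_iff, binaryForm_apply]
  simp

end TypicalRanks

end BinaryForm

open BinaryForm

theorem stmt16_general {d : ℕ} (hd : d ≠ 0) (r : ℕ) :
    (interior (rankLocus d r)).Nonempty ↔ d < 2 * r ∧ r ≤ d := by
  refine ⟨fun h ↦ ⟨?_, ?_⟩, fun ⟨hr, hrd⟩ ↦ interior_rankLocus_nonempty_of_le hd hr hrd⟩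
  · by_contra! hr
    have hsub := h.mono (interior_mono (rankLocus_subset_setOf_isSumOfPowers hd))
    rw [interior_isSumOfPowers_eq_empty hr] at hsub
    exact Set.not_nonempty_empty hsub
  · obtain ⟨a, -, rfl⟩ := h.mono interior_subset
    exact (realRank_binaryForm_le_iff hd).mpr (isSumOfPowers_degree hd a)

/-- identifying real binary quintics with coefficient vectors in `ℝ⁶`,
the set of quintics of real rank exactly `r` has nonempty interior iff `r ∈ {3,4,5}`. -/
theorem stmt16 (r : ℕ) :
    (interior {a : Fin 6 → ℝ |
        (∑ i : Fin 6, C ((Nat.choose 5 (i : ℕ) : ℝ) * a i) *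
          X 0 ^ (5 - (i : ℕ)) * X 1 ^ (i : ℕ)) ≠ 0 ∧
        realRank (∑ i : Fin 6, C ((Nat.choose 5 (i : ℕ) : ℝ) * a i) *
          X 0 ^ (5 - (i : ℕ)) * X 1 ^ (i : ℕ)) 5 = r}).Nonempty ↔
      r = 3 ∨ r = 4 ∨ r = 5 := by
  simp only [sum_C_choose_mul_X_pow_ne_zero_iff, ← binaryForm_apply]
  exact (stmt16_general (by simp) r).trans (by lia)
end
end
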